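/- Let n ≥ 1 be an integer, Ω ⊂ ℝⁿ a bounded open set, T > 0, x₀ ∈ ℝⁿ \ cl(Ω), and β ∈ (0,1) with sup_{x∈Ω}|x−x₀| < βT. Let C₀ > 0 be such that ψ ≥ 1 on Ω × (−T,T), where ψ(x,t) = |x−x₀|² − βt² + C₀. Then there exist λ > 0, s₀ > 0 and M > 0 such that, with φ = e^{λψ}, for every s ≥ s₀ and every smooth function z : ℝⁿ × ℝ → ℝ vanishing for x outside a compact subset of Ω: s ∫_Ω e^{2sφ(x,−T)} (|∂ₜz(x,−T)|² + |∇z(x,−T)|²) dx + s³ ∫_Ω e^{2sφ(x,−T)} |z(x,−T)|² dx ≤ M ∫_{−T}^{T} ∫_Ω e^{2sφ} |∂ₜ²z − Δz|² dx dt. -/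

import Mathlib

open MeasureTheory Real Set
open scoped RealInnerProductSpace

/-- The Laplacian of a real-valued function on Euclidean space. -/
noncomputable def lap {n : ℕ} (f : EuclideanSpace ℝ (Fin n) → ℝ) (x : EuclideanSpace ℝ (Fin n)) : ℝ :=
  ∑ i : Fin n, fderiv ℝ (fun y => fderiv ℝ f y (EuclideanSpace.single i 1)) x (EuclideanSpace.single i 1)

/-- The weight `ψ(x,t) = |x - x₀|² - β t² + C₀`. -/
noncomputable def psi {n : ℕ} (x₀ : EuclideanSpace ℝ (Fin n)) (β C₀ : ℝ)
    (x : EuclideanSpace ℝ (Fin n)) (t : ℝ) : ℝ :=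
  ‖x - x₀‖ ^ 2 - β * t ^ 2 + C₀

/-- The Carleman weight `φ = e^{λψ}`. -/
noncomputable def phi {n : ℕ} (x₀ : EuclideanSpace ℝ (Fin n)) (β C₀ l : ℝ)
    (x : EuclideanSpace ℝ (Fin n)) (t : ℝ) : ℝ :=
  Real.exp (l * psi x₀ β C₀ x t)

/-!
Put `Φ = s e^{λψ}` and `v = e^Φ z`, so that `v` solves an equation for the conjugated operator
`e^Φ □ e^{-Φ} = □ - 2 Γ(Φ, ·) + (Γ(Φ, Φ) - □Φ)`, where `Γ` is the quadratic form of `□ = ∂ₜ² - Δ`.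
Multiplying `□v + Γ(Φ, Φ) v` by the first order expression `θ v - 2 Γ(Φ, v)` gives a divergence plus
terms quadratic in `v` and its first derivatives. For `β < 1` the weight `ψ` is strongly
pseudoconvex: its Hessian plus a multiple of `Γ` is positive definite. With `λ` large this makes the
quadratic terms positive at the leading orders `s |∇v|²` and `s³ v²`, and the remaining terms are
absorbed for large `s`. Hence the divergence is at most half the square of the conjugated operator
applied to `v`.

Integrating over the cylinder leaves only the fluxes through `t = ±T`, where `-∂ₜψ = 2βt`. Since
`|x - x₀| < βT`, the time derivative of `ψ` dominates its spatial gradient there, so at `t = ±T` the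
flux times `t` is bounded below by `s |∇v|² + s³ v²`. The flux at `T` can thus be discarded, and
the one at `-T` controls the left-hand side of the estimate.
-/

section DirectionalDerivative

variable {V : Type*} [NormedAddCommGroup V] [NormedSpace ℝ V] {f g : V → ℝ}

/-- The derivative of `f` in the direction `e`, as a function on the whole space. -/
noncomputable def dirDeriv (e : V) (f : V → ℝ) : V → ℝ := fun q => fderiv ℝ f q e

theorem dirDeriv_add (e : V) (hf : Differentiable ℝ f) (hg : Differentiable ℝ g) :
    dirDeriv e (f + g) = dirDeriv e f + dirDeriv e g := by
  ext q
  simp [dirDeriv, fderiv_add (hf q) (hg q)]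

theorem dirDeriv_sub (e : V) (hf : Differentiable ℝ f) (hg : Differentiable ℝ g) :
    dirDeriv e (f - g) = dirDeriv e f - dirDeriv e g := by
  ext q
  simp [dirDeriv, fderiv_sub (hf q) (hg q)]

theorem dirDeriv_mul (e : V) (hf : Differentiable ℝ f) (hg : Differentiable ℝ g) :
    dirDeriv e (f * g) = f * dirDeriv e g + g * dirDeriv e f := by
  ext q
  simp [dirDeriv, fderiv_mul (hf q) (hg q)]

theorem dirDeriv_smul (e : V) (c : ℝ) (f : V → ℝ) :
    dirDeriv e (c • f) = c • dirDeriv e f := by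
  ext q
  simp [dirDeriv, fderiv_const_smul_field]

theorem dirDeriv_sum {ι : Type*} [Fintype ι] {F : ι → V → ℝ} (e : V)
    (hF : ∀ a, Differentiable ℝ (F a)) :
    dirDeriv e (∑ a, F a) = ∑ a, dirDeriv e (F a) := by
  ext q
  simp [dirDeriv, fderiv_sum fun a _ => hF a q]

theorem contDiff_dirDeriv {m k : WithTop ℕ∞} (e : V) (hf : ContDiff ℝ k f) (hmk : m + 1 ≤ k) :
    ContDiff ℝ m (dirDeriv e f) :=
  (hf.fderiv_right hmk).clm_apply contDiff_const

theorem contDiff_one_dirDeriv (e : V) (hf : ContDiff ℝ 2 f) : ContDiff ℝ 1 (dirDeriv e f) :=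
  contDiff_dirDeriv e hf (by norm_num)

theorem differentiable_dirDeriv (e : V) (hf : ContDiff ℝ 2 f) : Differentiable ℝ (dirDeriv e f) :=
  (contDiff_one_dirDeriv e hf).differentiable one_ne_zero

theorem continuous_dirDeriv (e : V) (hf : ContDiff ℝ 1 f) : Continuous (dirDeriv e f) :=
  (contDiff_dirDeriv (m := 0) e hf (by simp)).continuous

theorem dirDeriv_comm (e e' : V) (hf : ContDiff ℝ 2 f) :
    dirDeriv e (dirDeriv e' f) = dirDeriv e' (dirDeriv e f) := by
  have iterated (u w : V) (q : V) :
      dirDeriv u (dirDeriv w f) q = fderiv ℝ (fderiv ℝ f) q u w := by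
    have hd : DifferentiableAt ℝ (fderiv ℝ f) q :=
      (hf.fderiv_right (m := 1) (by norm_num)).differentiable one_ne_zero q
    unfold dirDeriv
    simp [fderiv_clm_apply hd (differentiableAt_const w)]
  ext q
  rw [iterated, iterated]
  exact hf.contDiffAt.isSymmSndFDerivAt (by simp) e e'

theorem dirDeriv_eq_zero_of_notMem {S : Set V} (hS : IsClosed S) (hf : ∀ q ∉ S, f q = 0) (e : V)
    {q : V} (hq : q ∉ S) : dirDeriv e f q = 0 := by
  have hloc : f =ᶠ[nhds q] fun _ => 0 :=
    Filter.eventually_of_mem (hS.isOpen_compl.mem_nhds hq) hf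
  simp [dirDeriv, hloc.fderiv_eq]

end DirectionalDerivative

section GradientCalculus

variable {V : Type*} [NormedAddCommGroup V] [NormedSpace ℝ V]
  {ι : Type*} (e : ι → V) (η : ι → ℝ) {f g h : V → ℝ}

/-- The vector field `f ∇g`, with the gradient taken with respect to `η`, given by its components
in the frame `e`. -/
noncomputable def gradField (f g : V → ℝ) (a : ι) : V → ℝ :=
  η a • (f * dirDeriv (e a) g)

theorem contDiff_gradField (hf : ContDiff ℝ 1 f) (hg : ContDiff ℝ 2 g) (a : ι) :
    ContDiff ℝ 1 (gradField e η f g a) :=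
  (hf.mul (contDiff_one_dirDeriv (e a) hg)).const_smul (η a)

variable [Fintype ι]

/-- The bilinear form `Γ(f, g) = ∑ₐ ηₐ ∂ₐf ∂ₐg` in the gradients of two functions. The
signature is carried by `η`: `Γ(f, f) = |∂ₜf|² - |∇f|²` for the wave operator, and the squared
length of the space-time gradient for `η = 1`. -/
noncomputable def gradForm (f g : V → ℝ) : V → ℝ :=
  ∑ a, η a • (dirDeriv (e a) f * dirDeriv (e a) g)

/-- The second order operator `□f = ∑ₐ ηₐ ∂ₐ²f`. -/
noncomputable def boxOp (f : V → ℝ) : V → ℝ :=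
  ∑ a, η a • dirDeriv (e a) (dirDeriv (e a) f)

/-- The Hessian of `f` evaluated on the `η`-gradients of `g` and `h`,
`∑ₐ ∑_b ηₐ η_b ∂ₐ∂_bf ∂ₐg ∂_bh`. -/
noncomputable def hessForm (f g h : V → ℝ) : V → ℝ :=
  ∑ a, ∑ b, (η a * η b) • (dirDeriv (e a) (dirDeriv (e b) f) * dirDeriv (e a) g *
    dirDeriv (e b) h)

/-- The divergence `∑ₐ ∂ₐFₐ` of a vector field given by its components in the frame `e`. -/
noncomputable def frameDiv (F : ι → V → ℝ) : V → ℝ :=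
  ∑ a, dirDeriv (e a) (F a)

theorem gradForm_comm (f g : V → ℝ) : gradForm e η f g = gradForm e η g f := by
  simp only [gradForm, mul_comm]

theorem gradForm_one_self_nonneg (f : V → ℝ) (q : V) : 0 ≤ gradForm e 1 f f q := by
  simp only [gradForm, Finset.sum_apply, Pi.mul_apply, Pi.one_apply, one_smul]
  exact Finset.sum_nonneg fun a _ => mul_self_nonneg _

theorem gradForm_smul_left (c : ℝ) (f g : V → ℝ) :
    gradForm e η (c • f) g = c • gradForm e η f g := by
  simp only [gradForm, dirDeriv_smul, Finset.smul_sum, smul_mul_assoc, smul_comm c]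

theorem gradForm_sub_left (hf : Differentiable ℝ f) (hg : Differentiable ℝ g) (h : V → ℝ) :
    gradForm e η (f - g) h = gradForm e η f h - gradForm e η g h := by
  simp only [gradForm, dirDeriv_sub _ hf hg, sub_mul, smul_sub, Finset.sum_sub_distrib]

theorem gradForm_mul_left (hf : Differentiable ℝ f) (hg : Differentiable ℝ g) (h : V → ℝ) :
    gradForm e η (f * g) h = f * gradForm e η g h + g * gradForm e η f h := by
  simp only [gradForm, dirDeriv_mul _ hf hg, add_mul, smul_add, Finset.sum_add_distrib,
    Finset.mul_sum, mul_smul_comm, mul_assoc]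

theorem gradForm_gradForm_left (hf : ContDiff ℝ 2 f) (hg : ContDiff ℝ 2 g) (h : V → ℝ) :
    gradForm e η (gradForm e η f g) h = hessForm e η f h g + hessForm e η g h f := by
  have hdiff (a : ι) :
      Differentiable ℝ (η a • (dirDeriv (e a) f * dirDeriv (e a) g)) :=
    ((differentiable_dirDeriv (e a) hf).mul (differentiable_dirDeriv (e a) hg)).const_smul (η a)
  have hprod (a b : ι) : dirDeriv (e a) (dirDeriv (e b) f * dirDeriv (e b) g) = _ :=
    dirDeriv_mul _ (differentiable_dirDeriv (e b) hf) (differentiable_dirDeriv (e b) hg)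
  rw [gradForm]
  ext q
  simp only [gradForm, hessForm, dirDeriv_sum _ hdiff, dirDeriv_smul, hprod, Finset.sum_mul,
    Finset.smul_sum, ← Finset.sum_add_distrib, Finset.sum_apply, Pi.add_apply, Pi.mul_apply,
    Pi.smul_apply, smul_eq_mul]
  refine Finset.sum_congr rfl fun a _ => Finset.sum_congr rfl fun b _ => ?_
  ring

theorem hessForm_comm (hf : ContDiff ℝ 2 f) (g h : V → ℝ) :
    hessForm e η f g h = hessForm e η f h g := by
  rw [hessForm, Finset.sum_comm]
  refine Finset.sum_congr rfl fun a _ => Finset.sum_congr rfl fun b _ => ?_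
  rw [dirDeriv_comm (e b) (e a) hf, mul_right_comm, mul_comm (η b)]

theorem boxOp_smul (c : ℝ) (f : V → ℝ) : boxOp e η (c • f) = c • boxOp e η f := by
  simp only [boxOp, dirDeriv_smul, Finset.smul_sum, smul_comm c]

theorem boxOp_mul (hf : ContDiff ℝ 2 f) (hg : ContDiff ℝ 2 g) :
    boxOp e η (f * g) = f * boxOp e η g + (2 : ℝ) • gradForm e η f g + g * boxOp e η f := by
  have hf' := hf.differentiable two_ne_zero
  have hg' := hg.differentiable two_ne_zero
  have hfd (a : ι) := differentiable_dirDeriv (e a) hf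
  have hgd (a : ι) := differentiable_dirDeriv (e a) hg
  have hsecond (a : ι) : dirDeriv (e a) (dirDeriv (e a) (f * g)) =
      f * dirDeriv (e a) (dirDeriv (e a) g) +
        (2 : ℝ) • (dirDeriv (e a) f * dirDeriv (e a) g) +
        g * dirDeriv (e a) (dirDeriv (e a) f) := by
    rw [dirDeriv_mul _ hf' hg', dirDeriv_add _ (hf'.mul (hgd a)) (hg'.mul (hfd a)),
      dirDeriv_mul _ hf' (hgd a), dirDeriv_mul _ hg' (hfd a), two_smul]
    ring
  simp only [boxOp, gradForm, hsecond, smul_add, Finset.sum_add_distrib, Finset.mul_sum,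
    Finset.smul_sum, mul_smul_comm, smul_comm (2 : ℝ)]

theorem frameDiv_add {F G : ι → V → ℝ} (hF : ∀ a, Differentiable ℝ (F a))
    (hG : ∀ a, Differentiable ℝ (G a)) : frameDiv e (F + G) = frameDiv e F + frameDiv e G := by
  simp only [frameDiv, Pi.add_apply, dirDeriv_add _ (hF _) (hG _), Finset.sum_add_distrib]

theorem frameDiv_gradField (hf : Differentiable ℝ f) (hg : ContDiff ℝ 2 g) :
    frameDiv e (gradField e η f g) = gradForm e η f g + f * boxOp e η g := by
  simp only [frameDiv, gradField, dirDeriv_smul,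
    dirDeriv_mul _ hf (differentiable_dirDeriv _ hg), gradForm, boxOp, Finset.mul_sum,
    smul_add, Finset.sum_add_distrib, mul_smul_comm, mul_comm, add_comm]

theorem gradForm_eq_zero_of_notMem {S : Set V} (hS : IsClosed S) (hf : ∀ q ∉ S, f q = 0)
    (g : V → ℝ) {q : V} (hq : q ∉ S) : gradForm e η f g q = 0 := by
  simp [gradForm, dirDeriv_eq_zero_of_notMem hS hf _ hq]

theorem boxOp_eq_zero_of_notMem {S : Set V} (hS : IsClosed S) (hf : ∀ q ∉ S, f q = 0) {q : V}
    (hq : q ∉ S) : boxOp e η f q = 0 := by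
  simp [boxOp, dirDeriv_eq_zero_of_notMem hS
    (fun _ hp => dirDeriv_eq_zero_of_notMem hS hf _ hp) _ hq]

theorem contDiff_gradForm (hf : ContDiff ℝ 2 f) (hg : ContDiff ℝ 2 g) :
    ContDiff ℝ 1 (gradForm e η f g) := by
  rw [gradForm, Finset.sum_fn]
  exact .sum fun a _ =>
    ((contDiff_one_dirDeriv (e a) hf).mul (contDiff_one_dirDeriv (e a) hg)).const_smul (η a)

theorem contDiff_boxOp {m k : WithTop ℕ∞} (hf : ContDiff ℝ k f) (hmk : m + 2 ≤ k) :
    ContDiff ℝ m (boxOp e η f) := by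
  have hmk' : m + 1 + 1 ≤ k := by rwa [add_assoc, one_add_one_eq_two]
  rw [boxOp, Finset.sum_fn]
  exact .sum fun a _ =>
    (contDiff_dirDeriv (e a) (contDiff_dirDeriv (e a) hf hmk') le_rfl).const_smul (η a)

end GradientCalculus

section MultiplierIdentity

variable {V : Type*} [NormedAddCommGroup V] [NormedSpace ℝ V]
  {ι : Type*} [Fintype ι] (e : ι → V) (η : ι → ℝ) {φ A θ v : V → ℝ}

/-- The flux produced by testing `□v + A v` against the multiplier `θ v - 2 Γ(φ, v)`. -/
noncomputable def multiplierFlux (φ A θ v : V → ℝ) : ι → V → ℝ :=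
  gradField e η (θ * v - (2 : ℝ) • gradForm e η φ v) v +
    gradField e η (gradForm e η v v - A * (v * v)) φ +
    gradField e η (-(1 / 2 : ℝ) • (v * v)) θ

theorem contDiff_multiplierFlux (hφ : ContDiff ℝ 2 φ) (hA : ContDiff ℝ 1 A) (hθ : ContDiff ℝ 2 θ)
    (hv : ContDiff ℝ 2 v) (a : ι) : ContDiff ℝ 1 (multiplierFlux e η φ A θ v a) := by
  have hv₁ : ContDiff ℝ 1 v := hv.of_le one_le_two
  have hθ₁ : ContDiff ℝ 1 θ := hθ.of_le one_le_two
  have hX := contDiff_gradForm e η hφ hv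
  have hG := contDiff_gradForm e η hv hv
  exact ((contDiff_gradField e η ((hθ₁.mul hv₁).sub (hX.const_smul (2 : ℝ))) hv a).add
    (contDiff_gradField e η (hG.sub (hA.mul (hv₁.mul hv₁))) hφ a)).add
    (contDiff_gradField e η ((hv₁.mul hv₁).const_smul (-(1 / 2 : ℝ))) hθ a)

theorem multiplierFlux_eq_zero {q : V} (hv : v q = 0) (hdv : ∀ a, dirDeriv (e a) v q = 0)
    (φ A θ : V → ℝ) (a : ι) : multiplierFlux e η φ A θ v a q = 0 := by
  simp [multiplierFlux, gradField, gradForm, hv, hdv]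

/- The second derivatives of `v` drop out because `Γ(Γ(φ, v), v) = Hφ(v, v) + Hv(φ, v)` while
`Γ(Γ(v, v), φ) = 2 Hv(φ, v)`. -/
theorem frameDiv_multiplierFlux (hφ : ContDiff ℝ 2 φ) (hA : ContDiff ℝ 1 A)
    (hθ : ContDiff ℝ 2 θ) (hv : ContDiff ℝ 2 v) :
    frameDiv e (multiplierFlux e η φ A θ v) =
      (boxOp e η v + A * v) * (θ * v - (2 : ℝ) • gradForm e η φ v) -
        (2 : ℝ) • hessForm e η φ v v + (boxOp e η φ + θ) * gradForm e η v v -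
        (gradForm e η φ A + A * (boxOp e η φ + θ)) * (v * v) -
        (1 / 2 : ℝ) • (boxOp e η θ * (v * v)) := by
  have hv₁ : ContDiff ℝ 1 v := hv.of_le one_le_two
  have hθ₁ : ContDiff ℝ 1 θ := hθ.of_le one_le_two
  have dv := hv₁.differentiable one_ne_zero
  have dθ := hθ₁.differentiable one_ne_zero
  have dA := hA.differentiable one_ne_zero
  have dX := (contDiff_gradForm e η hφ hv).differentiable one_ne_zero
  have dG := (contDiff_gradForm e η hv hv).differentiable one_ne_zero
  have d₁ : Differentiable ℝ (θ * v - (2 : ℝ) • gradForm e η φ v) :=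
    (dθ.mul dv).sub (dX.const_smul (2 : ℝ))
  have d₂ : Differentiable ℝ (gradForm e η v v - A * (v * v)) := dG.sub (dA.mul (dv.mul dv))
  have d₃ : Differentiable ℝ (-(1 / 2 : ℝ) • (v * v)) := (dv.mul dv).const_smul _
  have field_diff {f g : V → ℝ} (hf : Differentiable ℝ f) (hg : ContDiff ℝ 2 g) (a : ι) :
      Differentiable ℝ (gradField e η f g a) :=
    (hf.mul (differentiable_dirDeriv (e a) hg)).const_smul (η a)
  have d₁₂ (a : ι) : Differentiable ℝ ((gradField e η (θ * v - (2 : ℝ) • gradForm e η φ v) v +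
      gradField e η (gradForm e η v v - A * (v * v)) φ) a) :=
    (field_diff d₁ hv a).add (field_diff d₂ hφ a)
  rw [multiplierFlux, frameDiv_add e d₁₂ (field_diff d₃ hθ),
    frameDiv_add e (field_diff d₁ hv) (field_diff d₂ hφ),
    frameDiv_gradField e η d₁ hv, frameDiv_gradField e η d₂ hφ, frameDiv_gradField e η d₃ hθ,
    gradForm_sub_left e η (dθ.mul dv) (dX.const_smul (2 : ℝ)),
    gradForm_sub_left e η dG (dA.mul (dv.mul dv)), gradForm_smul_left, gradForm_smul_left,
    gradForm_mul_left e η dθ dv, gradForm_mul_left e η dA (dv.mul dv),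
    gradForm_mul_left e η dv dv, gradForm_mul_left e η dv dv,
    gradForm_gradForm_left e η hφ hv, gradForm_gradForm_left e η hv hv,
    hessForm_comm e η hv v φ, gradForm_comm e η A φ, gradForm_comm e η v φ,
    gradForm_comm e η v θ]
  ext q
  simp only [Pi.add_apply, Pi.sub_apply, Pi.mul_apply, Pi.smul_apply, smul_eq_mul]
  ring

end MultiplierIdentity

section ExponentialWeight

/-- The weight `s e^{l ψ}`. It serves both as the Carleman weight and, with `s = 1`, as the factor
conjugating the wave operator. -/
noncomputable def expWeight {V : Type*} (s l : ℝ) (ψ : V → ℝ) : V → ℝ :=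
  fun q => s * exp (l * ψ q)

theorem expWeight_eq_smul {V : Type*} (s l : ℝ) (ψ : V → ℝ) :
    expWeight s l ψ = s • expWeight 1 l ψ := by
  ext q
  simp [expWeight]

variable {V : Type*} [NormedAddCommGroup V] [NormedSpace ℝ V]
  {ι : Type*} [Fintype ι] (e : ι → V) (η : ι → ℝ) (s l : ℝ) {ψ : V → ℝ}

theorem contDiff_expWeight {k : WithTop ℕ∞} (hψ : ContDiff ℝ k ψ) :
    ContDiff ℝ k (expWeight s l ψ) :=
  contDiff_const.mul (contDiff_const.mul hψ).exp

theorem dirDeriv_expWeight (u : V) (hψ : Differentiable ℝ ψ) :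
    dirDeriv u (expWeight s l ψ) = l • (expWeight s l ψ * dirDeriv u ψ) := by
  ext q
  have hexp : fderiv ℝ (expWeight s l ψ) q = s • (exp (l * ψ q) • (l • fderiv ℝ ψ q)) :=
    (((hψ q).hasFDerivAt.const_mul l).exp.const_mul s).fderiv
  simp only [dirDeriv, hexp, expWeight, Pi.smul_apply, Pi.mul_apply, smul_eq_mul,
    smul_apply]
  ring

theorem gradForm_expWeight_left (hψ : Differentiable ℝ ψ) (f : V → ℝ) :
    gradForm e η (expWeight s l ψ) f = l • (expWeight s l ψ * gradForm e η ψ f) := by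
  simp only [gradForm, dirDeriv_expWeight s l _ hψ, Finset.smul_sum, Finset.mul_sum,
    smul_mul_assoc, mul_smul_comm, mul_assoc, smul_comm l]

theorem gradForm_expWeight_self (hψ : Differentiable ℝ ψ) :
    gradForm e η (expWeight s l ψ) (expWeight s l ψ) =
      l ^ 2 • (expWeight s l ψ ^ 2 * gradForm e η ψ ψ) := by
  rw [gradForm_expWeight_left e η s l hψ, gradForm_comm, gradForm_expWeight_left e η s l hψ]
  ext q
  simp only [Pi.mul_apply, Pi.pow_apply, Pi.smul_apply, smul_eq_mul]
  ring

theorem dirDeriv_dirDeriv_expWeight (u w : V) (hψ : ContDiff ℝ 2 ψ) :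
    dirDeriv u (dirDeriv w (expWeight s l ψ)) =
      l • (expWeight s l ψ * (dirDeriv u (dirDeriv w ψ) + l • (dirDeriv u ψ * dirDeriv w ψ))) := by
  have dψ := hψ.differentiable two_ne_zero
  have dΦ := (contDiff_expWeight s l hψ).differentiable two_ne_zero
  rw [dirDeriv_expWeight s l w dψ, dirDeriv_smul, dirDeriv_mul u dΦ (differentiable_dirDeriv w hψ),
    dirDeriv_expWeight s l u dψ]
  ext q
  simp only [Pi.add_apply, Pi.mul_apply, Pi.smul_apply, smul_eq_mul]
  ring

theorem boxOp_expWeight (hψ : ContDiff ℝ 2 ψ) :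
    boxOp e η (expWeight s l ψ) =
      l • (expWeight s l ψ * (boxOp e η ψ + l • gradForm e η ψ ψ)) := by
  ext q
  simp only [boxOp, gradForm, dirDeriv_dirDeriv_expWeight s l _ _ hψ, Finset.sum_apply,
    Pi.add_apply, Pi.mul_apply, Pi.smul_apply, smul_eq_mul, ← Finset.sum_add_distrib,
    Finset.mul_sum]
  exact Finset.sum_congr rfl fun a _ => by ring

theorem hessForm_expWeight (hψ : ContDiff ℝ 2 ψ) (f : V → ℝ) :
    hessForm e η (expWeight s l ψ) f f =
      l • (expWeight s l ψ * (hessForm e η ψ f f + l • gradForm e η ψ f ^ 2)) := by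
  have hsq : gradForm e η ψ f ^ 2 = ∑ a, ∑ b, (η a • (dirDeriv (e a) ψ * dirDeriv (e a) f)) *
      (η b • (dirDeriv (e b) ψ * dirDeriv (e b) f)) := by
    rw [gradForm, sq, Finset.sum_mul_sum]
  rw [hsq]
  ext q
  simp only [hessForm, dirDeriv_dirDeriv_expWeight s l _ _ hψ, Finset.sum_apply, Pi.add_apply,
    Pi.mul_apply, Pi.smul_apply, smul_eq_mul, Finset.mul_sum, ← Finset.sum_add_distrib]
  exact Finset.sum_congr rfl fun a _ => Finset.sum_congr rfl fun b _ => by ring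

theorem gradForm_gradForm_expWeight (hψ : ContDiff ℝ 2 ψ) :
    gradForm e η (expWeight s l ψ) (gradForm e η (expWeight s l ψ) (expWeight s l ψ)) =
      (2 * l ^ 3) • (expWeight s l ψ ^ 3 * (hessForm e η ψ ψ ψ + l • gradForm e η ψ ψ ^ 2)) := by
  have dψ := hψ.differentiable two_ne_zero
  have hΦ := contDiff_expWeight s l hψ
  have hess_ψ : hessForm e η ψ (expWeight s l ψ) (expWeight s l ψ) =
      l ^ 2 • (expWeight s l ψ ^ 2 * hessForm e η ψ ψ ψ) := by
    ext q
    simp only [hessForm, dirDeriv_expWeight s l _ dψ, Finset.sum_apply, Pi.mul_apply,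
      Pi.pow_apply, Pi.smul_apply, smul_eq_mul, Finset.mul_sum]
    exact Finset.sum_congr rfl fun a _ => Finset.sum_congr rfl fun b _ => by ring
  rw [gradForm_comm e η _ (gradForm _ _ _ _), gradForm_gradForm_left e η hΦ hΦ,
    hessForm_expWeight e η s l hψ, hess_ψ, gradForm_comm e η ψ (expWeight s l ψ),
    gradForm_expWeight_left e η s l dψ]
  ext q
  simp only [Pi.add_apply, Pi.mul_apply, Pi.pow_apply, Pi.smul_apply, smul_eq_mul]
  ring

end ExponentialWeight

section InteriorEstimate

variable {V : Type*} [NormedAddCommGroup V] [NormedSpace ℝ V]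
  {ι : Type*} [Fintype ι] (e : ι → V) (η : ι → ℝ) (μ s l : ℝ) {Φ ψ v : V → ℝ}

theorem expWeight_neg_mul_expWeight {V : Type*} (Φ z : V → ℝ) :
    expWeight 1 (-1) Φ * (expWeight 1 1 Φ * z) = z := by
  ext q
  simp [expWeight, ← mul_assoc, ← exp_add]

theorem boxOp_expWeight_neg_mul (hΦ : ContDiff ℝ 2 Φ) (hv : ContDiff ℝ 2 v) :
    boxOp e η (expWeight 1 (-1) Φ * v) = expWeight 1 (-1) Φ *
      (boxOp e η v - (2 : ℝ) • gradForm e η Φ v + (gradForm e η Φ Φ - boxOp e η Φ) * v) := by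
  rw [boxOp_mul e η (contDiff_expWeight 1 (-1) hΦ) hv, boxOp_expWeight e η 1 (-1) hΦ,
    gradForm_expWeight_left e η 1 (-1) (hΦ.differentiable two_ne_zero)]
  ext q
  simp only [Pi.add_apply, Pi.sub_apply, Pi.mul_apply, Pi.smul_apply, smul_eq_mul]
  ring

/-- `ψ` is strongly pseudoconvex on `S`, in the sharpened form in which the Hessian of `ψ` plus
`μ` times the form of the operator controls the full gradient with constant `ρ`. -/
def IsPseudoconvexOn (ρ μ : ℝ) (ψ : V → ℝ) (S : Set V) : Prop :=
  ∀ q ∈ S, ∀ f : V → ℝ, ρ * gradForm e 1 f f q ≤ hessForm e η ψ f f q + μ * gradForm e η f f q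

/-- The zeroth order part `θ` of the multiplier `θ v - 2 Γ(Φ, v)` for the weight `Φ = s e^{l ψ}`.
It is chosen so that `□Φ + θ = -2 μ l Φ`. -/
noncomputable def carlemanMultiplier (ψ : V → ℝ) : V → ℝ :=
  -(2 * μ * l) • expWeight s l ψ - boxOp e η (expWeight s l ψ)

/-- The flux of the multiplier identity for the conjugated operator `e^Φ □ e^{-Φ}`,
`Φ = s e^{l ψ}`. -/
noncomputable def carlemanFlux (ψ v : V → ℝ) : ι → V → ℝ :=
  multiplierFlux e η (expWeight s l ψ) (gradForm e η (expWeight s l ψ) (expWeight s l ψ))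
    (carlemanMultiplier e η μ s l ψ) v

theorem carlemanMultiplier_eq_smul (ψ : V → ℝ) :
    carlemanMultiplier e η μ s l ψ = s • carlemanMultiplier e η μ 1 l ψ := by
  rw [carlemanMultiplier, expWeight_eq_smul, boxOp_smul, smul_comm, ← smul_sub, carlemanMultiplier]

theorem contDiff_carlemanMultiplier (hψ : ContDiff ℝ 4 ψ) :
    ContDiff ℝ 2 (carlemanMultiplier e η μ s l ψ) :=
  ((contDiff_expWeight s l (hψ.of_le (by norm_num : (2 : WithTop ℕ∞) ≤ 4))).const_smul
    (-(2 * μ * l))).sub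
    (contDiff_boxOp e η (contDiff_expWeight s l hψ) (by norm_num : (2 : WithTop ℕ∞) + 2 ≤ 4))

theorem contDiff_carlemanFlux (hψ : ContDiff ℝ 4 ψ) (hv : ContDiff ℝ 2 v) (a : ι) :
    ContDiff ℝ 1 (carlemanFlux e η μ s l ψ v a) := by
  have hΦ : ContDiff ℝ 2 (expWeight s l ψ) := contDiff_expWeight s l (hψ.of_le (by norm_num))
  exact contDiff_multiplierFlux e η hΦ (contDiff_gradForm e η hΦ hΦ)
    (contDiff_carlemanMultiplier e η μ s l hψ) hv a

theorem carlemanFlux_eq_zero_of_notMem {S : Set V} (hS : IsClosed S) (hv : ∀ q ∉ S, v q = 0)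
    (ψ : V → ℝ) (a : ι) {q : V} (hq : q ∉ S) : carlemanFlux e η μ s l ψ v a q = 0 :=
  multiplierFlux_eq_zero e η (hv q hq) (fun b => dirDeriv_eq_zero_of_notMem hS hv (e b) hq) _ _ _ a

theorem frameDiv_carlemanFlux (hψ : ContDiff ℝ 4 ψ) (hv : ContDiff ℝ 2 v) (q : V) :
    frameDiv e (carlemanFlux e η μ s l ψ v) q =
      (boxOp e η v q + gradForm e η (expWeight s l ψ) (expWeight s l ψ) q * v q) *
        (carlemanMultiplier e η μ s l ψ q * v q - 2 * gradForm e η (expWeight s l ψ) v q) -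
      2 * l * expWeight s l ψ q *
        (hessForm e η ψ v v q + l * gradForm e η ψ v q ^ 2 + μ * gradForm e η v v q) -
      (2 * l ^ 3 * expWeight s l ψ q ^ 3 *
        (hessForm e η ψ ψ ψ q + l * gradForm e η ψ ψ q ^ 2 - μ * gradForm e η ψ ψ q) +
        boxOp e η (carlemanMultiplier e η μ s l ψ) q / 2) * v q ^ 2 := by
  have hψ₂ : ContDiff ℝ 2 ψ := hψ.of_le (by norm_num)
  have hΦ := contDiff_expWeight s l hψ₂
  have hbox : boxOp e η (expWeight s l ψ) + carlemanMultiplier e η μ s l ψ =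
      -(2 * μ * l) • expWeight s l ψ := by
    rw [carlemanMultiplier, add_sub_cancel]
  rw [carlemanFlux, frameDiv_multiplierFlux e η hΦ (contDiff_gradForm e η hΦ hΦ)
    (contDiff_carlemanMultiplier e η μ s l hψ) hv, hbox, hessForm_expWeight e η s l hψ₂,
    gradForm_gradForm_expWeight e η s l hψ₂,
    gradForm_expWeight_self e η s l (hψ₂.differentiable two_ne_zero)]
  simp only [Pi.add_apply, Pi.sub_apply, Pi.mul_apply, Pi.pow_apply, Pi.smul_apply, smul_eq_mul]
  ring

theorem mul_carlemanMultiplier_le (hψ : ContDiff ℝ 2 ψ) (hv : ContDiff ℝ 2 v) (q : V) :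
    (boxOp e η v q + gradForm e η (expWeight s l ψ) (expWeight s l ψ) q * v q) *
        (carlemanMultiplier e η μ s l ψ q * v q - 2 * gradForm e η (expWeight s l ψ) v q) ≤
      exp (2 * expWeight s l ψ q) * boxOp e η (expWeight 1 (-1) (expWeight s l ψ) * v) q ^ 2 / 2 +
        2 * μ ^ 2 * l ^ 2 * expWeight s l ψ q ^ 2 * v q ^ 2 := by
  set P := boxOp e η v q + gradForm e η (expWeight s l ψ) (expWeight s l ψ) q * v q
  set Q := carlemanMultiplier e η μ s l ψ q * v q - 2 * gradForm e η (expWeight s l ψ) v q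
  set R := P + Q + 2 * μ * l * expWeight s l ψ q * v q with hR
  have conjugated : exp (2 * expWeight s l ψ q) *
      boxOp e η (expWeight 1 (-1) (expWeight s l ψ) * v) q ^ 2 = R ^ 2 := by
    have hexp : exp (2 * expWeight s l ψ q) * expWeight 1 (-1) (expWeight s l ψ) q ^ 2 = 1 := by
      rw [show expWeight 1 (-1) (expWeight s l ψ) q = exp (-1 * expWeight s l ψ q) from one_mul _,
        ← exp_nat_mul, ← exp_add, exp_eq_one_iff]
      push_cast
      ring
    rw [boxOp_expWeight_neg_mul e η (contDiff_expWeight s l hψ) hv, Pi.mul_apply, mul_pow,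
      ← mul_assoc, hexp, one_mul]
    simp only [hR, P, Q, carlemanMultiplier, Pi.add_apply, Pi.sub_apply, Pi.mul_apply,
      Pi.smul_apply, smul_eq_mul]
    ring
  rw [conjugated]
  nlinarith [sq_nonneg (P - Q), sq_nonneg (R + 2 * μ * l * expWeight s l ψ q * v q)]

theorem eventually_sq_add_le_cube (a b : ℝ) {c : ℝ} (hc : 0 < c) :
    ∀ᶠ s : ℝ in Filter.atTop, a * s ^ 2 + b * s ≤ c * s ^ 3 := by
  filter_upwards [Filter.eventually_ge_atTop 1,
    Filter.eventually_ge_atTop ((|a| + |b|) / c)] with s hs₁ hs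
  have hcs : |a| + |b| ≤ c * s := by rwa [div_le_iff₀' hc] at hs
  calc a * s ^ 2 + b * s ≤ |a| * s ^ 2 + |b| * s ^ 2 := by
        gcongr
        · exact le_abs_self a
        · exact le_abs_self b
        · nlinarith
    _ = (|a| + |b|) * s ^ 2 := by ring
    _ ≤ c * s * s ^ 2 := by gcongr
    _ = c * s ^ 3 := by ring

theorem frameDiv_carlemanFlux_le {ρ d : ℝ} {q : V} (hψ : ContDiff ℝ 4 ψ) (hv : ContDiff ℝ 2 v)
    (hs : 0 ≤ s) (hl : 0 < l) (hρ : 0 ≤ ρ) (hpc : IsPseudoconvexOn e η ρ μ ψ {q})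
    (hd : d ≤ gradForm e 1 ψ ψ q) (hμ : 2 * μ ^ 2 ≤ l * (ρ * d))
    (hlarge : 2 * μ ^ 2 * l ^ 2 * expWeight s l ψ q ^ 2 -
      boxOp e η (carlemanMultiplier e η μ s l ψ) q / 2 ≤
        ρ * d * l ^ 3 * expWeight s l ψ q ^ 3) :
    frameDiv e (carlemanFlux e η μ s l ψ v) q ≤
      exp (2 * expWeight s l ψ q) *
        boxOp e η (expWeight 1 (-1) (expWeight s l ψ) * v) q ^ 2 / 2 := by
  have hΦ : 0 ≤ expWeight s l ψ q := mul_nonneg hs (exp_pos _).le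
  have gradient_term : 0 ≤ 2 * l * expWeight s l ψ q *
      (hessForm e η ψ v v q + l * gradForm e η ψ v q ^ 2 + μ * gradForm e η v v q) := by
    have := hpc q rfl v
    have : 0 ≤ l * gradForm e η ψ v q ^ 2 := by positivity
    have : 0 ≤ ρ * gradForm e 1 v v q := mul_nonneg hρ (gradForm_one_self_nonneg e v q)
    exact mul_nonneg (by positivity) (by linarith)
  have convexity : ρ * d ≤
      2 * (hessForm e η ψ ψ ψ q + l * gradForm e η ψ ψ q ^ 2 - μ * gradForm e η ψ ψ q) := by
    have hess := hpc q rfl ψ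
    have hρd : ρ * d ≤ ρ * gradForm e 1 ψ ψ q := by gcongr
    have square : 0 ≤ 2 * l * (l * gradForm e η ψ ψ q ^ 2 - 2 * μ * gradForm e η ψ ψ q) +
        2 * μ ^ 2 := by nlinarith [sq_nonneg (l * gradForm e η ψ ψ q - μ)]
    have : 0 ≤ 2 * (l * gradForm e η ψ ψ q ^ 2 - 2 * μ * gradForm e η ψ ψ q) + ρ * d :=
      nonneg_of_mul_nonneg_right (by linarith) hl
    linarith
  have cubic : ρ * d * l ^ 3 * expWeight s l ψ q ^ 3 ≤ 2 * l ^ 3 * expWeight s l ψ q ^ 3 *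
      (hessForm e η ψ ψ ψ q + l * gradForm e η ψ ψ q ^ 2 - μ * gradForm e η ψ ψ q) := by
    nlinarith [mul_le_mul_of_nonneg_left convexity (by positivity :
      0 ≤ l ^ 3 * expWeight s l ψ q ^ 3)]
  have product := mul_carlemanMultiplier_le e η μ s l (hψ.of_le (by norm_num)) hv q
  have zeroth := mul_le_mul_of_nonneg_right (hlarge.trans cubic) (sq_nonneg (v q))
  rw [frameDiv_carlemanFlux e η μ s l hψ hv q]
  linarith

theorem eventually_frameDiv_carlemanFlux_le {ρ d : ℝ} {S : Set V} (hS : IsCompact S)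
    (hψ : ContDiff ℝ 4 ψ) (hl : 0 < l) (hρ : 0 < ρ) (hpc : IsPseudoconvexOn e η ρ μ ψ S)
    (hd₀ : 0 < d) (hd : ∀ q ∈ S, d ≤ gradForm e 1 ψ ψ q) (hμ : 2 * μ ^ 2 ≤ l * (ρ * d)) :
    ∀ᶠ s in Filter.atTop, ∀ q ∈ S, ∀ v : V → ℝ, ContDiff ℝ 2 v →
      frameDiv e (carlemanFlux e η μ s l ψ v) q ≤
        exp (2 * expWeight s l ψ q) *
          boxOp e η (expWeight 1 (-1) (expWeight s l ψ) * v) q ^ 2 / 2 := by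
  obtain ⟨N, hN⟩ := hS.exists_bound_of_continuousOn hψ.continuous.continuousOn
  obtain ⟨B, hB⟩ := hS.exists_bound_of_continuousOn
    (contDiff_boxOp e η (contDiff_carlemanMultiplier e η μ 1 l hψ)
      (m := 0) (by norm_num)).continuous.continuousOn
  have hc : 0 < ρ * d * l ^ 3 * exp (-l * N) ^ 3 := by positivity
  filter_upwards [Filter.eventually_ge_atTop 0,
    eventually_sq_add_le_cube (2 * μ ^ 2 * l ^ 2 * exp (l * N) ^ 2) (B / 2) hc]
    with s hs hcube q hq v hv
  obtain ⟨hlower, hupper⟩ := abs_le.mp (hN q hq)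
  refine frameDiv_carlemanFlux_le e η μ s l hψ hv hs hl hρ.le
    (by rintro _ rfl; exact hpc _ hq) (hd q hq) hμ ?_
  have hbox : boxOp e η (carlemanMultiplier e η μ s l ψ) q =
      s * boxOp e η (carlemanMultiplier e η μ 1 l ψ) q := by
    rw [carlemanMultiplier_eq_smul, boxOp_smul, Pi.smul_apply, smul_eq_mul]
  calc 2 * μ ^ 2 * l ^ 2 * expWeight s l ψ q ^ 2 -
        boxOp e η (carlemanMultiplier e η μ s l ψ) q / 2
      ≤ 2 * μ ^ 2 * l ^ 2 * (s * exp (l * N)) ^ 2 + s * B / 2 := by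
        have hΦ : expWeight s l ψ q ≤ s * exp (l * N) := by
          unfold expWeight
          gcongr
        have hΦ₀ : 0 ≤ expWeight s l ψ q := mul_nonneg hs (exp_pos _).le
        have hboxB : -(s * B) ≤ boxOp e η (carlemanMultiplier e η μ s l ψ) q := by
          rw [hbox, ← mul_neg]
          gcongr
          exact (abs_le.mp (hB q hq)).1
        rw [sub_eq_add_neg]
        gcongr
        linarith
    _ = 2 * μ ^ 2 * l ^ 2 * exp (l * N) ^ 2 * s ^ 2 + B / 2 * s := by ring
    _ ≤ ρ * d * l ^ 3 * exp (-l * N) ^ 3 * s ^ 3 := hcube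
    _ = ρ * d * l ^ 3 * (s * exp (-l * N)) ^ 3 := by ring
    _ ≤ ρ * d * l ^ 3 * expWeight s l ψ q ^ 3 := by
        have : -l * N ≤ l * ψ q := by nlinarith
        unfold expWeight
        gcongr

end InteriorEstimate

section SpaceTimeDivergence

theorem integrable_space_slice {X : Type*} [TopologicalSpace X] [R1Space X] [MeasurableSpace X]
    [OpensMeasurableSpace X] (ν : Measure X) [IsFiniteMeasureOnCompacts ν] {K : Set X}
    (hK : IsCompact K) {f : X × ℝ → ℝ} (hf : Continuous f)
    (hf₀ : ∀ q ∉ Prod.fst ⁻¹' K, f q = 0) (t : ℝ) : Integrable (fun x => f (x, t)) ν :=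
  Continuous.integrable_of_hasCompactSupport (by fun_prop)
    (HasCompactSupport.intro hK fun x hx => hf₀ (x, t) hx)

variable {E : Type*} [NormedAddCommGroup E] [NormedSpace ℝ E] {f : E × ℝ → ℝ}

theorem hasDerivAt_time_slice (hf : Differentiable ℝ f) (x : E) (t : ℝ) :
    HasDerivAt (fun t => f (x, t)) (dirDeriv (0, 1) f (x, t)) t :=
  (hf (x, t)).hasFDerivAt.comp_hasDerivAt t ((hasDerivAt_const t x).prodMk (hasDerivAt_id t))

theorem fderiv_space_slice (hf : Differentiable ℝ f) (x : E) (t : ℝ) (u : E) :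
    fderiv ℝ (fun y => f (y, t)) x u = dirDeriv (u, 0) f (x, t) := by
  have hslice : fderiv ℝ (fun y => f (y, t)) x =
      (fderiv ℝ f (x, t)).comp (ContinuousLinearMap.inl ℝ E ℝ) :=
    ((hf (x, t)).hasFDerivAt.comp x ((hasFDerivAt_id x).prodMk (hasFDerivAt_const t x))).fderiv
  simp [hslice, dirDeriv]

/-- The space-time frame with the time direction at `none` and the spatial directions `u i` at
`some i`. -/
def spaceTimeFrame {ι : Type*} (u : ι → E) : Option ι → E × ℝ
  | none => (0, 1)
  | some i => (u i, 0)

variable [FiniteDimensional ℝ E] [MeasurableSpace E] [BorelSpace E] (ν : Measure E) {K : Set E}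
  (hK : IsCompact K)
include hK

theorem integrable_time_slab [IsFiniteMeasureOnCompacts ν] (hf : Continuous f)
    (hf₀ : ∀ q ∉ Prod.fst ⁻¹' K, f q = 0) (a b : ℝ) :
    Integrable (fun p : ℝ × E => f (p.2, p.1)) ((volume.restrict (Ioo a b)).prod ν) := by
  have on_compact : IntegrableOn (fun p : ℝ × E => f (p.2, p.1)) (Icc a b ×ˢ K)
      (volume.prod ν) :=
    ContinuousOn.integrableOn_compact (isCompact_Icc.prod hK)
      (Continuous.continuousOn (by fun_prop))
  have on_slab : IntegrableOn (fun p : ℝ × E => f (p.2, p.1)) (Icc a b ×ˢ univ)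
      (volume.prod ν) := by
    refine on_compact.of_forall_sdiff_eq_zero (measurableSet_Icc.prod .univ) ?_
    rintro ⟨t, x⟩ ⟨⟨ht, -⟩, hx⟩
    exact hf₀ (x, t) fun hxK => hx ⟨ht, hxK⟩
  have on_open_slab := on_slab.mono_set (prod_mono Ioo_subset_Icc_self Subset.rfl)
  rwa [IntegrableOn, ← Measure.prod_restrict, Measure.restrict_univ] at on_open_slab

theorem integral_dirDeriv_space_eq_zero [ν.IsAddHaarMeasure] (hf : ContDiff ℝ 1 f)
    (hf₀ : ∀ q ∉ Prod.fst ⁻¹' K, f q = 0) (u : E) (t : ℝ) :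
    ∫ x, dirDeriv (u, 0) f (x, t) ∂ν = 0 := by
  have hS : IsClosed (Prod.fst ⁻¹' K : Set (E × ℝ)) := hK.isClosed.preimage continuous_fst
  have hd := hf.differentiable one_ne_zero
  have hint := integrable_space_slice ν hK hf.continuous hf₀ t
  have hint' := integrable_space_slice ν hK (continuous_dirDeriv (u, 0) hf)
    (fun q hq => dirDeriv_eq_zero_of_notMem hS hf₀ (u, 0) hq) t
  have by_parts := integral_mul_fderiv_eq_neg_fderiv_mul_of_integrable (μ := ν)
    (f := fun _ : E => (1 : ℝ)) (g := fun y => f (y, t)) (v := u) (by simp)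
    (by simpa only [fderiv_space_slice hd, one_mul] using hint')
    (by simpa only [one_mul] using hint)
    (fun _ _ => differentiableAt_const 1) (fun y _ => by fun_prop)
  simpa [fderiv_space_slice hd] using by_parts

theorem integral_dirDeriv_time [IsFiniteMeasureOnCompacts ν] (hf : ContDiff ℝ 1 f)
    (hf₀ : ∀ q ∉ Prod.fst ⁻¹' K, f q = 0) {a b : ℝ} (hab : a ≤ b) :
    ∫ t in Ioo a b, ∫ x, dirDeriv (0, 1) f (x, t) ∂ν =
      (∫ x, f (x, b) ∂ν) - ∫ x, f (x, a) ∂ν := by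
  have hS : IsClosed (Prod.fst ⁻¹' K : Set (E × ℝ)) := hK.isClosed.preimage continuous_fst
  have hd := hf.differentiable one_ne_zero
  have hc : Continuous (dirDeriv (0, 1) f) := continuous_dirDeriv _ hf
  rw [integral_integral_swap (f := fun t x => dirDeriv (0, 1) f (x, t))
      (integrable_time_slab ν hK hc
        (fun q hq => dirDeriv_eq_zero_of_notMem hS hf₀ (0, 1) hq) a b),
    ← integral_sub (integrable_space_slice ν hK hf.continuous hf₀ b)
      (integrable_space_slice ν hK hf.continuous hf₀ a)]
  congr with x
  rw [← integral_Ioc_eq_integral_Ioo, ← intervalIntegral.integral_of_le hab]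
  exact intervalIntegral.integral_eq_sub_of_hasDerivAt
    (fun t _ => hasDerivAt_time_slice hd x t)
    (Continuous.intervalIntegrable (by fun_prop) a b)

theorem integral_frameDiv_spaceTimeFrame [ν.IsAddHaarMeasure] {ι : Type*} [Fintype ι] (u : ι → E)
    {F : Option ι → E × ℝ → ℝ} (hF : ∀ a, ContDiff ℝ 1 (F a))
    (hF₀ : ∀ a, ∀ q ∉ Prod.fst ⁻¹' K, F a q = 0) {a b : ℝ} (hab : a ≤ b) :
    ∫ t in Ioo a b, ∫ x, frameDiv (spaceTimeFrame u) F (x, t) ∂ν =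
      (∫ x, F none (x, b) ∂ν) - ∫ x, F none (x, a) ∂ν := by
  have hS : IsClosed (Prod.fst ⁻¹' K : Set (E × ℝ)) := hK.isClosed.preimage continuous_fst
  have hint (e : E × ℝ) (c : Option ι) (t : ℝ) :
      Integrable (fun x => dirDeriv e (F c) (x, t)) ν :=
    integrable_space_slice ν hK (continuous_dirDeriv e (hF c))
      (fun q hq => dirDeriv_eq_zero_of_notMem hS (hF₀ c) e hq) t
  have only_time (t : ℝ) : ∫ x, frameDiv (spaceTimeFrame u) F (x, t) ∂ν =
      ∫ x, dirDeriv (0, 1) (F none) (x, t) ∂ν := by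
    simp only [frameDiv, Finset.sum_apply]
    rw [integral_finsetSum _ fun c _ => hint _ c t, Fintype.sum_option]
    simp [spaceTimeFrame, integral_dirDeriv_space_eq_zero ν hK (hF _) (hF₀ _)]
  simp only [only_time]
  exact integral_dirDeriv_time ν hK (hF none) (hF₀ none) hab

theorem integral_time_slab_mono [IsFiniteMeasureOnCompacts ν] {g : E × ℝ → ℝ} (hf : Continuous f)
    (hg : Continuous g) (hf₀ : ∀ q ∉ Prod.fst ⁻¹' K, f q = 0) (hg₀ : ∀ q ∉ Prod.fst ⁻¹' K, g q = 0)
    {a b : ℝ} (hfg : ∀ x ∈ K, ∀ t ∈ Ioo a b, f (x, t) ≤ g (x, t)) :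
    ∫ t in Ioo a b, ∫ x, f (x, t) ∂ν ≤ ∫ t in Ioo a b, ∫ x, g (x, t) ∂ν := by
  refine setIntegral_mono_on (integrable_time_slab ν hK hf hf₀ a b).integral_prod_left
    (integrable_time_slab ν hK hg hg₀ a b).integral_prod_left measurableSet_Ioo fun t ht =>
      integral_mono (integrable_space_slice ν hK hf hf₀ t) (integrable_space_slice ν hK hg hg₀ t)
        fun x => ?_
  by_cases hx : x ∈ K
  · exact hfg x hx t ht
  · exact (hf₀ (x, t) hx).trans_le (hg₀ (x, t) hx).ge

theorem integral_initial_le_of_frameDiv_le [ν.IsAddHaarMeasure] {ι : Type*} [Fintype ι] {u : ι → E}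
    {F : Option ι → E × ℝ → ℝ} {p r : E × ℝ → ℝ} (hF : ∀ a, ContDiff ℝ 1 (F a))
    (hF₀ : ∀ a, ∀ q ∉ Prod.fst ⁻¹' K, F a q = 0) (hp : Continuous p)
    (hp₀ : ∀ q ∉ Prod.fst ⁻¹' K, p q = 0) (hr : Continuous r)
    (hr₀ : ∀ q ∉ Prod.fst ⁻¹' K, r q = 0) {a b M : ℝ} (hab : a ≤ b)
    (hM : 0 ≤ M) (initial : ∀ x ∈ K, p (x, a) ≤ M * -F none (x, a))
    (final : ∀ x ∈ K, 0 ≤ F none (x, b))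
    (interior : ∀ x ∈ K, ∀ t ∈ Ioo a b, frameDiv (spaceTimeFrame u) F (x, t) ≤ r (x, t)) :
    ∫ x, p (x, a) ∂ν ≤ M * ∫ t in Ioo a b, ∫ x, r (x, t) ∂ν := by
  have hS : IsClosed (Prod.fst ⁻¹' K : Set (E × ℝ)) := hK.isClosed.preimage continuous_fst
  have hdiv : Continuous (frameDiv (spaceTimeFrame u) F) := by
    rw [frameDiv, Finset.sum_fn]
    exact continuous_finsetSum _ fun c _ => continuous_dirDeriv _ (hF c)
  have hdiv₀ : ∀ q ∉ Prod.fst ⁻¹' K, frameDiv (spaceTimeFrame u) F q = 0 := fun q hq => by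
    simp [frameDiv, fun c => dirDeriv_eq_zero_of_notMem hS (hF₀ c) (spaceTimeFrame u c) hq]
  have initial_le : ∫ x, p (x, a) ∂ν ≤ M * -∫ x, F none (x, a) ∂ν := by
    rw [← integral_neg, ← integral_const_mul]
    refine integral_mono (integrable_space_slice ν hK hp hp₀ a)
      ((integrable_space_slice ν hK (hF none).continuous (hF₀ none) a).neg.const_mul M)
      fun x => ?_
    by_cases hx : x ∈ K
    · exact initial x hx
    · simp [hp₀ (x, a) hx, hF₀ none (x, a) hx]
  have final_nonneg : 0 ≤ ∫ x, F none (x, b) ∂ν := integral_nonneg fun x => by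
    by_cases hx : x ∈ K
    · exact final x hx
    · exact (hF₀ none (x, b) hx).ge
  calc ∫ x, p (x, a) ∂ν ≤ M * ((∫ x, F none (x, b) ∂ν) - ∫ x, F none (x, a) ∂ν) := by
        linarith [mul_nonneg hM final_nonneg]
    _ = M * ∫ t in Ioo a b, ∫ x, frameDiv (spaceTimeFrame u) F (x, t) ∂ν := by
        rw [integral_frameDiv_spaceTimeFrame ν hK u hF hF₀ hab]
    _ ≤ M * ∫ t in Ioo a b, ∫ x, r (x, t) ∂ν :=
        mul_le_mul_of_nonneg_left
          (integral_time_slab_mono ν hK hdiv hr hdiv₀ hr₀ interior) hM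

end SpaceTimeDivergence

section QuadraticWeight

variable {n : ℕ} (x₀ : EuclideanSpace ℝ (Fin n)) (β C₀ : ℝ)

/-- The signature of the wave operator in a space-time frame. -/
def waveSignature {ι : Type*} : Option ι → ℝ
  | none => 1
  | some _ => -1

/-- The weight `ψ` as a function on space-time. -/
noncomputable def spaceTimePsi (q : EuclideanSpace ℝ (Fin n) × ℝ) : ℝ := psi x₀ β C₀ q.1 q.2

theorem contDiff_spaceTimePsi {k : WithTop ℕ∞} : ContDiff ℝ k (spaceTimePsi x₀ β C₀) := by
  unfold spaceTimePsi psi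
  exact (((contDiff_fst.sub contDiff_const).norm_sq ℝ).sub
    (contDiff_const.mul (contDiff_snd.pow 2))).add contDiff_const

theorem dirDeriv_spaceTimePsi (w : EuclideanSpace ℝ (Fin n) × ℝ) :
    dirDeriv w (spaceTimePsi x₀ β C₀) = fun q => 2 * ⟪q.1 - x₀, w.1⟫ - 2 * β * q.2 * w.2 := by
  ext q
  have hψ : HasFDerivAt (spaceTimePsi x₀ β C₀) _ q :=
    (((hasFDerivAt_fst.sub_const x₀).norm_sq).sub
      ((hasFDerivAt_snd.pow 2).const_mul β)).add_const C₀
  simp only [dirDeriv, hψ.fderiv, Nat.add_one_sub_one, pow_one, nsmul_eq_mul, Nat.cast_ofNat,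
    sub_apply, smul_apply, ContinuousLinearMap.comp_apply, ContinuousLinearMap.coe_fst',
    coe_innerSL_apply, ContinuousLinearMap.coe_snd', smul_eq_mul]
  ring

theorem dirDeriv_dirDeriv_spaceTimePsi (w w' : EuclideanSpace ℝ (Fin n) × ℝ) :
    dirDeriv w (dirDeriv w' (spaceTimePsi x₀ β C₀)) =
      fun _ => 2 * ⟪w.1, w'.1⟫ - 2 * β * w.2 * w'.2 := by
  ext q
  rw [dirDeriv_spaceTimePsi]
  have hψ : HasFDerivAt (fun q : EuclideanSpace ℝ (Fin n) × ℝ =>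
      2 * ⟪q.1 - x₀, w'.1⟫ - 2 * β * q.2 * w'.2) _ q :=
    (((hasFDerivAt_fst.sub_const x₀).inner ℝ (hasFDerivAt_const w'.1 q)).const_mul 2).sub
      ((hasFDerivAt_snd.const_mul (2 * β)).mul_const w'.2)
  simp only [dirDeriv, hψ.fderiv, sub_apply, smul_apply, ContinuousLinearMap.comp_apply,
    ContinuousLinearMap.prod_apply, ContinuousLinearMap.coe_fst', zero_apply,
    fderivInnerCLM_apply, inner_zero_right, zero_add, smul_eq_mul, ContinuousLinearMap.coe_snd']
  ring

/-- The coordinate frame of space-time. -/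
noncomputable def coordFrame (n : ℕ) : Option (Fin n) → EuclideanSpace ℝ (Fin n) × ℝ :=
  spaceTimeFrame fun i => EuclideanSpace.single i 1

/-- The polarized squared length of the spatial gradient. -/
noncomputable def spaceGradForm (f g : EuclideanSpace ℝ (Fin n) × ℝ → ℝ) :
    EuclideanSpace ℝ (Fin n) × ℝ → ℝ :=
  ∑ i, dirDeriv (EuclideanSpace.single i 1, 0) f * dirDeriv (EuclideanSpace.single i 1, 0) g

variable (f g : EuclideanSpace ℝ (Fin n) × ℝ → ℝ)

theorem spaceGradForm_self_nonneg (q : EuclideanSpace ℝ (Fin n) × ℝ) :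
    0 ≤ spaceGradForm f f q := by
  simpa [spaceGradForm] using Finset.sum_nonneg fun i _ => mul_self_nonneg _

theorem gradForm_waveSignature : gradForm (coordFrame n) waveSignature f g =
    dirDeriv (0, 1) f * dirDeriv (0, 1) g - spaceGradForm f g := by
  simp [gradForm, spaceGradForm, coordFrame, spaceTimeFrame, waveSignature, Fintype.sum_option,
    sub_eq_add_neg]

theorem gradForm_one_coordFrame : gradForm (coordFrame n) 1 f g =
    dirDeriv (0, 1) f * dirDeriv (0, 1) g + spaceGradForm f g := by
  simp [gradForm, spaceGradForm, coordFrame, spaceTimeFrame, Fintype.sum_option]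

theorem hessForm_spaceTimePsi : hessForm (coordFrame n) waveSignature (spaceTimePsi x₀ β C₀) f f =
    (2 : ℝ) • spaceGradForm f f - (2 * β) • dirDeriv (0, 1) f ^ 2 := by
  ext q
  simp [hessForm, spaceGradForm, coordFrame, spaceTimeFrame, waveSignature, Fintype.sum_option,
    dirDeriv_dirDeriv_spaceTimePsi, EuclideanSpace.inner_single_left,
    Finset.mul_sum, mul_assoc, sq, sub_eq_neg_add]

theorem isPseudoconvexOn_spaceTimePsi (S : Set (EuclideanSpace ℝ (Fin n) × ℝ)) :
    IsPseudoconvexOn (coordFrame n) waveSignature (1 - β) (1 + β) (spaceTimePsi x₀ β C₀) S := by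
  intro q _ f
  rw [hessForm_spaceTimePsi, gradForm_waveSignature, gradForm_one_coordFrame]
  simp only [Pi.add_apply, Pi.sub_apply, Pi.mul_apply, Pi.pow_apply, Pi.smul_apply, smul_eq_mul]
  exact le_of_eq (by ring)

theorem spaceGradForm_spaceTimePsi_spaceTimePsi (q : EuclideanSpace ℝ (Fin n) × ℝ) :
    spaceGradForm (spaceTimePsi x₀ β C₀) (spaceTimePsi x₀ β C₀) q = 4 * ‖q.1 - x₀‖ ^ 2 := by
  simp only [spaceGradForm, dirDeriv_spaceTimePsi, Finset.sum_apply, Pi.mul_apply, mul_zero,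
    sub_zero, EuclideanSpace.norm_sq_eq, Finset.mul_sum, EuclideanSpace.inner_single_right]
  refine Finset.sum_congr rfl fun i _ => ?_
  simp only [PiLp.sub_apply, ringHom_apply, one_mul, norm_eq_abs, sq_abs]
  ring

theorem sq_spaceGradForm_le (q : EuclideanSpace ℝ (Fin n) × ℝ) :
    spaceGradForm f g q ^ 2 ≤ spaceGradForm f f q * spaceGradForm g g q := by
  simpa [spaceGradForm, sq] using Finset.sum_mul_sq_le_sq_mul_sq Finset.univ
    (fun i => dirDeriv (EuclideanSpace.single i 1, 0) f q)
    (fun i => dirDeriv (EuclideanSpace.single i 1, 0) g q)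

end QuadraticWeight

section TimeBoundary

variable {n : ℕ} (x₀ : EuclideanSpace ℝ (Fin n)) (β C₀ μ s l : ℝ)
  (v : EuclideanSpace ℝ (Fin n) × ℝ → ℝ)

theorem time_mul_carlemanFlux_none (q : EuclideanSpace ℝ (Fin n) × ℝ) :
    q.2 * carlemanFlux (coordFrame n) waveSignature μ s l (spaceTimePsi x₀ β C₀) v none q =
      2 * l * expWeight s l (spaceTimePsi x₀ β C₀) q *
        (β * q.2 ^ 2 * gradForm (coordFrame n) 1 v v q +
          q.2 * dirDeriv (0, 1) v q * spaceGradForm (spaceTimePsi x₀ β C₀) v q) +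
      8 * l ^ 3 * expWeight s l (spaceTimePsi x₀ β C₀) q ^ 3 *
        (β * q.2 ^ 2 * (β ^ 2 * q.2 ^ 2 - ‖q.1 - x₀‖ ^ 2)) * v q ^ 2 +
      q.2 * (carlemanMultiplier (coordFrame n) waveSignature μ s l (spaceTimePsi x₀ β C₀) q *
          v q * dirDeriv (0, 1) v q -
        dirDeriv (0, 1) (carlemanMultiplier (coordFrame n) waveSignature μ s l
          (spaceTimePsi x₀ β C₀)) q * v q ^ 2 / 2) := by
  have dψ : Differentiable ℝ (spaceTimePsi x₀ β C₀) :=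
    (contDiff_spaceTimePsi x₀ β C₀ (k := 1)).differentiable one_ne_zero
  have hψt : dirDeriv (0, 1) (spaceTimePsi x₀ β C₀) q = -(2 * β * q.2) := by
    simp [dirDeriv_spaceTimePsi]
  have hΦ : gradForm (coordFrame n) waveSignature (expWeight s l (spaceTimePsi x₀ β C₀))
      (expWeight s l (spaceTimePsi x₀ β C₀)) q = l ^ 2 *
        expWeight s l (spaceTimePsi x₀ β C₀) q ^ 2 * (4 * (β ^ 2 * q.2 ^ 2 - ‖q.1 - x₀‖ ^ 2)) := by
    rw [gradForm_expWeight_self _ _ s l dψ, gradForm_waveSignature]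
    simp only [Pi.mul_apply, Pi.sub_apply, Pi.pow_apply, Pi.smul_apply, smul_eq_mul, hψt,
      spaceGradForm_spaceTimePsi_spaceTimePsi]
    ring
  have hΦv : gradForm (coordFrame n) waveSignature (expWeight s l (spaceTimePsi x₀ β C₀)) v q =
      l * expWeight s l (spaceTimePsi x₀ β C₀) q *
        (-(2 * β * q.2) * dirDeriv (0, 1) v q - spaceGradForm (spaceTimePsi x₀ β C₀) v q) := by
    rw [gradForm_expWeight_left _ _ s l dψ, gradForm_waveSignature]
    simp only [Pi.mul_apply, Pi.sub_apply, Pi.smul_apply, smul_eq_mul, hψt, mul_assoc]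
  have hnone : coordFrame n none = (0, 1) := rfl
  have hone : waveSignature (none : Option (Fin n)) = 1 := rfl
  simp only [carlemanFlux, multiplierFlux, gradField, Pi.add_apply, Pi.sub_apply, Pi.mul_apply,
    Pi.smul_apply, smul_eq_mul, hΦ, hΦv, gradForm_one_coordFrame, gradForm_waveSignature v,
    dirDeriv_expWeight s l _ dψ, hnone, hone, hψt]
  ring

variable {x₀ β C₀ s l}

theorem le_time_mul_carlemanFlux_none {T R : ℝ} {q : EuclideanSpace ℝ (Fin n) × ℝ} (hβ : 0 ≤ β)
    (hs : 0 ≤ s) (hl : 0 ≤ l) (hT : |q.2| = T) (hR : ‖q.1 - x₀‖ ≤ R) :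
    2 * l * expWeight s l (spaceTimePsi x₀ β C₀) q * (T * (β * T - R)) *
        gradForm (coordFrame n) 1 v v q +
      8 * l ^ 3 * expWeight s l (spaceTimePsi x₀ β C₀) q ^ 3 *
        (β * T ^ 2 * ((β * T) ^ 2 - R ^ 2)) * v q ^ 2 +
      q.2 * (carlemanMultiplier (coordFrame n) waveSignature μ s l (spaceTimePsi x₀ β C₀) q *
          v q * dirDeriv (0, 1) v q -
        dirDeriv (0, 1) (carlemanMultiplier (coordFrame n) waveSignature μ s l
          (spaceTimePsi x₀ β C₀)) q * v q ^ 2 / 2) ≤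
    q.2 * carlemanFlux (coordFrame n) waveSignature μ s l (spaceTimePsi x₀ β C₀) v none q := by
  have hΦ : 0 ≤ expWeight s l (spaceTimePsi x₀ β C₀) q := mul_nonneg hs (exp_pos _).le
  have hT₀ : 0 ≤ T := hT ▸ abs_nonneg _
  have hR₀ : 0 ≤ R := (norm_nonneg _).trans hR
  have ht : q.2 ^ 2 = T ^ 2 := by rw [← hT, sq_abs]
  have hG := spaceGradForm_self_nonneg v q
  have hr : ‖q.1 - x₀‖ ^ 2 ≤ R ^ 2 := by gcongr
  have cross : |q.2 * dirDeriv (0, 1) v q * spaceGradForm (spaceTimePsi x₀ β C₀) v q| ≤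
      T * R * gradForm (coordFrame n) 1 v v q := by
    have cauchy := sq_spaceGradForm_le (spaceTimePsi x₀ β C₀) v q
    rw [spaceGradForm_spaceTimePsi_spaceTimePsi] at cauchy
    rw [gradForm_one_coordFrame, Pi.add_apply, Pi.mul_apply]
    refine abs_le_of_sq_le_sq ?_ (mul_nonneg (mul_nonneg hT₀ hR₀)
      (add_nonneg (mul_self_nonneg _) hG))
    calc (q.2 * dirDeriv (0, 1) v q * spaceGradForm (spaceTimePsi x₀ β C₀) v q) ^ 2
        = T ^ 2 * dirDeriv (0, 1) v q ^ 2 * spaceGradForm (spaceTimePsi x₀ β C₀) v q ^ 2 := by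
          rw [mul_pow, mul_pow, ht]
      _ ≤ T ^ 2 * dirDeriv (0, 1) v q ^ 2 * (4 * R ^ 2 * spaceGradForm v v q) := by
          gcongr
          exact cauchy.trans (by gcongr)
      _ ≤ (T * R * (dirDeriv (0, 1) v q * dirDeriv (0, 1) v q + spaceGradForm v v q)) ^ 2 := by
          nlinarith [mul_nonneg (sq_nonneg (T * R))
            (sq_nonneg (dirDeriv (0, 1) v q ^ 2 - spaceGradForm v v q))]
  rw [time_mul_carlemanFlux_none, ht, mul_assoc (2 * l * _)]
  gcongr 2 * l * _ * ?_ + 8 * l ^ 3 * _ ^ 3 * (_ * ?_) * _ + _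
  · linarith [neg_le_of_abs_le cross]
  · linarith

end TimeBoundary

section BoundaryEstimate

theorem neg_le_mul_cross_term {t T a b B k x y : ℝ} (hk : 0 < k) (ht : |t| = T) (ha : |a| ≤ B)
    (hb : |b| ≤ B) :
    -(k / 2 * y ^ 2 + (T ^ 2 * B ^ 2 / (2 * k) + T * B / 2) * x ^ 2) ≤
      t * (a * x * y - b * x ^ 2 / 2) := by
  have hT : 0 ≤ T := ht ▸ abs_nonneg t
  have mixed : |t * (a * x * y)| ≤ k / 2 * y ^ 2 + T ^ 2 * B ^ 2 / (2 * k) * x ^ 2 := by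
    calc |t * (a * x * y)| = T * |a| * (|x| * |y|) := by
          simp only [abs_mul, ht]
          ring
      _ ≤ T * B * (|x| * |y|) := by gcongr
      _ ≤ k / 2 * |y| ^ 2 + T ^ 2 * B ^ 2 / (2 * k) * |x| ^ 2 := by
          have : 0 ≤ (k * |y| - T * B * |x|) ^ 2 / (2 * k) := by positivity
          have expand : (k * |y| - T * B * |x|) ^ 2 / (2 * k) =
              k / 2 * |y| ^ 2 + T ^ 2 * B ^ 2 / (2 * k) * |x| ^ 2 - T * B * (|x| * |y|) := by
            field_simp
            ring
          linarith
      _ = k / 2 * y ^ 2 + T ^ 2 * B ^ 2 / (2 * k) * x ^ 2 := by rw [sq_abs, sq_abs]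
  have square : t * b * x ^ 2 ≤ T * B * x ^ 2 := by
    have : t * b ≤ T * B := calc
      t * b ≤ |t| * |b| := (le_abs_self _).trans (abs_mul t b).le
      _ ≤ T * B := by rw [ht]; gcongr
    gcongr
  linarith [neg_le_of_abs_le mixed]

theorem exp_two_mul_gradForm_expWeight_neg_mul_le {V ι : Type*} [NormedAddCommGroup V]
    [NormedSpace ℝ V] [Fintype ι] (e : ι → V) {Φ v : V → ℝ} (hΦ : Differentiable ℝ Φ)
    (hv : Differentiable ℝ v) (q : V) :
    exp (2 * Φ q) * gradForm e 1 (expWeight 1 (-1) Φ * v) (expWeight 1 (-1) Φ * v) q ≤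
      2 * gradForm e 1 v v q + 2 * gradForm e 1 Φ Φ q * v q ^ 2 := by
  have hw : Differentiable ℝ (expWeight 1 (-1) Φ) := by
    unfold expWeight
    fun_prop
  have conjugated (a : ι) : dirDeriv (e a) (expWeight 1 (-1) Φ * v) q =
      exp (-Φ q) * (dirDeriv (e a) v q - v q * dirDeriv (e a) Φ q) := by
    rw [dirDeriv_mul _ hw hv, dirDeriv_expWeight _ _ _ hΦ]
    simp only [expWeight, Pi.add_apply, Pi.mul_apply, Pi.smul_apply, smul_eq_mul, one_mul, neg_mul]
    ring
  have hexp : exp (2 * Φ q) * (exp (-Φ q) * exp (-Φ q)) = 1 := by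
    rw [← exp_add, ← exp_add, exp_eq_one_iff]
    ring
  simp only [gradForm, Finset.sum_apply, Pi.mul_apply, Pi.one_apply, one_smul, conjugated,
    Finset.mul_sum, Finset.sum_mul, ← Finset.sum_add_distrib]
  refine Finset.sum_le_sum fun a _ => ?_
  calc exp (2 * Φ q) * (exp (-Φ q) * (dirDeriv (e a) v q - v q * dirDeriv (e a) Φ q) *
        (exp (-Φ q) * (dirDeriv (e a) v q - v q * dirDeriv (e a) Φ q)))
      = (dirDeriv (e a) v q - v q * dirDeriv (e a) Φ q) ^ 2 := by
        linear_combination (dirDeriv (e a) v q - v q * dirDeriv (e a) Φ q) ^ 2 * hexp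
    _ ≤ 2 * (dirDeriv (e a) v q * dirDeriv (e a) v q) +
        2 * (dirDeriv (e a) Φ q * dirDeriv (e a) Φ q) * v q ^ 2 := by
        linarith [sq_nonneg (dirDeriv (e a) v q + v q * dirDeriv (e a) Φ q)]

theorem le_gradForm_one_coordFrame {n : ℕ} (v : EuclideanSpace ℝ (Fin n) × ℝ → ℝ)
    (q : EuclideanSpace ℝ (Fin n) × ℝ) :
    dirDeriv (0, 1) v q ^ 2 ≤ gradForm (coordFrame n) 1 v v q := by
  rw [gradForm_one_coordFrame, sq]
  exact le_add_of_nonneg_right (spaceGradForm_self_nonneg v q)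

variable {n : ℕ} {x₀ : EuclideanSpace ℝ (Fin n)} {β l T R : ℝ} (C₀ μ : ℝ)

theorem min_mul_le_time_mul_carlemanFlux_none {s B k₁ k₃ : ℝ} {q : EuclideanSpace ℝ (Fin n) × ℝ}
    (v : EuclideanSpace ℝ (Fin n) × ℝ → ℝ) (hβ : 0 ≤ β) (hs : 0 ≤ s) (hl : 0 ≤ l)
    (hT : |q.2| = T) (hR : ‖q.1 - x₀‖ ≤ R) (hk₁ : 0 < k₁)
    (hθ : |carlemanMultiplier (coordFrame n) waveSignature μ 1 l (spaceTimePsi x₀ β C₀) q| ≤ B)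
    (hθt : |dirDeriv (0, 1)
      (carlemanMultiplier (coordFrame n) waveSignature μ 1 l (spaceTimePsi x₀ β C₀)) q| ≤ B)
    (hgrad : k₁ * s ≤ 2 * l * expWeight s l (spaceTimePsi x₀ β C₀) q * (T * (β * T - R)))
    (hsq : k₃ * s ^ 3 ≤ 8 * l ^ 3 * expWeight s l (spaceTimePsi x₀ β C₀) q ^ 3 *
      (β * T ^ 2 * ((β * T) ^ 2 - R ^ 2)))
    (absorb : (T ^ 2 * B ^ 2 / (2 * k₁) + T * B / 2) * s ≤ k₃ / 2 * s ^ 3) :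
    min (k₁ / 2) (k₃ / 2) * (s * gradForm (coordFrame n) 1 v v q + s ^ 3 * v q ^ 2) ≤
      q.2 * carlemanFlux (coordFrame n) waveSignature μ s l (spaceTimePsi x₀ β C₀) v none q := by
  have hG₀ : 0 ≤ gradForm (coordFrame n) 1 v v q := gradForm_one_self_nonneg _ v q
  have hG := mul_le_mul_of_nonneg_left (le_gradForm_one_coordFrame v q)
    (by positivity : 0 ≤ s * (k₁ / 2))
  have lower_order := mul_le_mul_of_nonneg_left (neg_le_mul_cross_term (x := v q)
    (y := dirDeriv (0, 1) v q) hk₁ hT hθ hθt) hs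
  have grad_term := mul_le_mul_of_nonneg_right hgrad hG₀
  have sq_term := mul_le_mul_of_nonneg_right hsq (sq_nonneg (v q))
  have absorbed := mul_le_mul_of_nonneg_right absorb (sq_nonneg (v q))
  refine le_trans ?_ (le_time_mul_carlemanFlux_none μ v hβ hs hl hT hR)
  rw [carlemanMultiplier_eq_smul, dirDeriv_smul]
  simp only [Pi.smul_apply, smul_eq_mul]
  calc min (k₁ / 2) (k₃ / 2) * (s * gradForm (coordFrame n) 1 v v q + s ^ 3 * v q ^ 2)
      ≤ k₁ / 2 * (s * gradForm (coordFrame n) 1 v v q) + k₃ / 2 * (s ^ 3 * v q ^ 2) := by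
        rw [mul_add]
        gcongr
        · exact min_le_left _ _
        · exact min_le_right _ _
    _ ≤ _ := by linarith

variable {S : Set (EuclideanSpace ℝ (Fin n) × ℝ)} (hS : IsCompact S) (hβ : 0 < β) (hl : 0 < l)
  (hT : 0 < T) (hR₀ : 0 ≤ R) (hRT : R < β * T) (hRS : ∀ q ∈ S, ‖q.1 - x₀‖ ≤ R)
include hS hβ hl hT hR₀ hRT hRS

theorem exists_eventually_le_time_mul_carlemanFlux_none :
    ∃ c > 0, ∀ᶠ s in Filter.atTop, ∀ q ∈ S, |q.2| = T →
      ∀ v : EuclideanSpace ℝ (Fin n) × ℝ → ℝ,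
        c * (s * gradForm (coordFrame n) 1 v v q + s ^ 3 * v q ^ 2) ≤ q.2 *
          carlemanFlux (coordFrame n) waveSignature μ s l (spaceTimePsi x₀ β C₀) v none q := by
  have hθ : ContDiff ℝ 1
      (carlemanMultiplier (coordFrame n) waveSignature μ 1 l (spaceTimePsi x₀ β C₀)) :=
    (contDiff_carlemanMultiplier _ _ μ 1 l (contDiff_spaceTimePsi x₀ β C₀)).of_le one_le_two
  obtain ⟨N, hN⟩ := hS.exists_bound_of_continuousOn
    (contDiff_spaceTimePsi x₀ β C₀ (k := 0)).continuous.continuousOn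
  obtain ⟨B₀, hB₀⟩ := hS.exists_bound_of_continuousOn hθ.continuous.continuousOn
  obtain ⟨B₁, hB₁⟩ := hS.exists_bound_of_continuousOn (continuous_dirDeriv (0, 1) hθ).continuousOn
  have gap : 0 < β * T ^ 2 * ((β * T) ^ 2 - R ^ 2) :=
    mul_pos (by positivity) (sub_pos.mpr (by gcongr))
  set k₁ := 2 * l * exp (-l * N) * (T * (β * T - R))
  set k₃ := 8 * l ^ 3 * exp (-l * N) ^ 3 * (β * T ^ 2 * ((β * T) ^ 2 - R ^ 2))
  have k₁_pos : 0 < k₁ := by positivity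
  have k₃_pos : 0 < k₃ := by positivity
  refine ⟨min (k₁ / 2) (k₃ / 2), by positivity, ?_⟩
  filter_upwards [Filter.eventually_ge_atTop 0, eventually_sq_add_le_cube 0
    (T ^ 2 * max B₀ B₁ ^ 2 / (2 * k₁) + T * max B₀ B₁ / 2) (half_pos k₃_pos)]
    with s hs absorb q hq hqT v
  have weight_ge : s * exp (-l * N) ≤ expWeight s l (spaceTimePsi x₀ β C₀) q := by
    have : -l * N ≤ l * spaceTimePsi x₀ β C₀ q := by nlinarith [(abs_le.mp (hN q hq)).1]
    unfold expWeight
    gcongr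
  refine min_mul_le_time_mul_carlemanFlux_none C₀ μ v hβ.le hs hl.le hqT (hRS q hq) k₁_pos
    ((hB₀ q hq).trans (le_max_left B₀ B₁)) ((hB₁ q hq).trans (le_max_right B₀ B₁)) ?_ ?_
    (by simpa using absorb)
  · calc k₁ * s = 2 * l * (s * exp (-l * N)) * (T * (β * T - R)) := by ring
      _ ≤ _ := by gcongr
  · calc k₃ * s ^ 3
        = 8 * l ^ 3 * (s * exp (-l * N)) ^ 3 * (β * T ^ 2 * ((β * T) ^ 2 - R ^ 2)) := by ring
      _ ≤ _ := by gcongr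

theorem exists_eventually_exp_mul_le_time_mul_carlemanFlux_none :
    ∃ C > 0, ∀ᶠ s in Filter.atTop, ∀ q ∈ S, |q.2| = T →
      ∀ Z : EuclideanSpace ℝ (Fin n) × ℝ → ℝ, Differentiable ℝ Z →
        s * (exp (2 * expWeight s l (spaceTimePsi x₀ β C₀) q) *
            gradForm (coordFrame n) 1 Z Z q) +
          s ^ 3 * (exp (2 * expWeight s l (spaceTimePsi x₀ β C₀) q) * Z q ^ 2) ≤
        C * (q.2 * carlemanFlux (coordFrame n) waveSignature μ s l (spaceTimePsi x₀ β C₀)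
          (expWeight 1 1 (expWeight s l (spaceTimePsi x₀ β C₀)) * Z) none q) := by
  have hΦ (s : ℝ) : ContDiff ℝ 2 (expWeight s l (spaceTimePsi x₀ β C₀)) :=
    contDiff_expWeight s l (contDiff_spaceTimePsi x₀ β C₀)
  obtain ⟨c, hc, hflux⟩ := exists_eventually_le_time_mul_carlemanFlux_none C₀ μ hS hβ hl hT hR₀
    hRT hRS
  obtain ⟨B, hB⟩ := hS.exists_bound_of_continuousOn
    (contDiff_gradForm (coordFrame n) 1 (hΦ 1) (hΦ 1)).continuous.continuousOn
  refine ⟨max 2 (2 * B + 1) / c, by positivity, ?_⟩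
  filter_upwards [hflux, Filter.eventually_ge_atTop 0] with s hflux hs q hq hqT Z hZ
  have hv : Differentiable ℝ (expWeight 1 1 (expWeight s l (spaceTimePsi x₀ β C₀)) * Z) :=
    ((contDiff_expWeight 1 1 (hΦ s)).differentiable two_ne_zero).mul hZ
  have grad_le := exp_two_mul_gradForm_expWeight_neg_mul_le (coordFrame n)
    ((hΦ s).differentiable two_ne_zero) hv q
  have hsq : (expWeight 1 1 (expWeight s l (spaceTimePsi x₀ β C₀)) * Z) q ^ 2 =
      exp (2 * expWeight s l (spaceTimePsi x₀ β C₀) q) * Z q ^ 2 := by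
    rw [Pi.mul_apply, mul_pow, expWeight, one_mul, one_mul, ← exp_nat_mul, Nat.cast_ofNat]
  have weight_grad : gradForm (coordFrame n) 1 (expWeight s l (spaceTimePsi x₀ β C₀))
      (expWeight s l (spaceTimePsi x₀ β C₀)) q ≤ s ^ 2 * B := by
    rw [expWeight_eq_smul, gradForm_smul_left, gradForm_comm, gradForm_smul_left, smul_smul, ← sq]
    exact mul_le_mul_of_nonneg_left ((le_abs_self _).trans (hB q hq)) (sq_nonneg s)
  rw [expWeight_neg_mul_expWeight] at grad_le
  have hcflux := hflux q hq hqT (expWeight 1 1 (expWeight s l (spaceTimePsi x₀ β C₀)) * Z)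
  set v := expWeight 1 1 (expWeight s l (spaceTimePsi x₀ β C₀)) * Z
  have hG₀ : 0 ≤ gradForm (coordFrame n) 1 v v q := gradForm_one_self_nonneg _ v q
  rw [← hsq]
  calc _ ≤ s * (2 * gradForm (coordFrame n) 1 v v q + 2 * (s ^ 2 * B) * v q ^ 2) +
        s ^ 3 * v q ^ 2 := by
        gcongr
        exact grad_le.trans (by gcongr)
    _ = 2 * (s * gradForm (coordFrame n) 1 v v q) + (2 * B + 1) * (s ^ 3 * v q ^ 2) := by ring
    _ ≤ max 2 (2 * B + 1) / c *
        (c * (s * gradForm (coordFrame n) 1 v v q + s ^ 3 * v q ^ 2)) := by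
        rw [← mul_assoc (max 2 (2 * B + 1) / c), div_mul_cancel₀ _ hc.ne', mul_add]
        gcongr
        · exact le_max_left _ _
        · exact le_max_right _ _
    _ ≤ _ := by gcongr

end BoundaryEstimate

section SpaceTimeEstimate

theorem weighted_energy_initial_le {E : Type*} [NormedAddCommGroup E] [NormedSpace ℝ E]
    [FiniteDimensional ℝ E] [MeasurableSpace E] [BorelSpace E] (ν : Measure E) [ν.IsAddHaarMeasure]
    {K : Set E} (hK : IsCompact K) {ι : Type*} [Fintype ι] {u : ι → E} {η : Option ι → ℝ}
    {F : Option ι → E × ℝ → ℝ} {W Z : E × ℝ → ℝ} {a b c₁ c₂ M : ℝ}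
    (hF : ∀ i, ContDiff ℝ 1 (F i)) (hF₀ : ∀ i, ∀ q ∉ Prod.fst ⁻¹' K, F i q = 0)
    (hW : Continuous W) (hZ : ContDiff ℝ 2 Z) (hZ₀ : ∀ q ∉ Prod.fst ⁻¹' K, Z q = 0) (hab : a ≤ b)
    (hM : 0 ≤ M)
    (initial : ∀ x ∈ K, c₁ * (W (x, a) * gradForm (spaceTimeFrame u) 1 Z Z (x, a)) +
      c₂ * (W (x, a) * Z (x, a) ^ 2) ≤ M * -F none (x, a))
    (final : ∀ x ∈ K, 0 ≤ F none (x, b))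
    (interior : ∀ x ∈ K, ∀ t ∈ Ioo a b, frameDiv (spaceTimeFrame u) F (x, t) ≤
      W (x, t) * boxOp (spaceTimeFrame u) η Z (x, t) ^ 2 / 2) :
    c₁ * (∫ x, W (x, a) * gradForm (spaceTimeFrame u) 1 Z Z (x, a) ∂ν) +
        c₂ * (∫ x, W (x, a) * Z (x, a) ^ 2 ∂ν) ≤
      M / 2 * ∫ t in Ioo a b, ∫ x, W (x, t) * boxOp (spaceTimeFrame u) η Z (x, t) ^ 2 ∂ν := by
  have hK' : IsClosed (Prod.fst ⁻¹' K : Set (E × ℝ)) := hK.isClosed.preimage continuous_fst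
  have grad_zero : ∀ q ∉ Prod.fst ⁻¹' K, W q * gradForm (spaceTimeFrame u) 1 Z Z q = 0 :=
    fun q hq => by rw [gradForm_eq_zero_of_notMem _ _ hK' hZ₀ Z hq, mul_zero]
  have sq_zero : ∀ q ∉ Prod.fst ⁻¹' K, W q * Z q ^ 2 = 0 := fun q hq => by simp [hZ₀ q hq]
  have box_zero : ∀ q ∉ Prod.fst ⁻¹' K, W q * boxOp (spaceTimeFrame u) η Z q ^ 2 / 2 = 0 :=
    fun q hq => by simp [boxOp_eq_zero_of_notMem _ _ hK' hZ₀ hq]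
  have cont_grad := (contDiff_gradForm (spaceTimeFrame u) 1 hZ hZ).continuous
  have cont_box := (contDiff_boxOp (spaceTimeFrame u) η hZ (m := 0) (by norm_num)).continuous
  have flux_estimate := integral_initial_le_of_frameDiv_le ν hK
    (p := fun q => c₁ * (W q * gradForm (spaceTimeFrame u) 1 Z Z q) + c₂ * (W q * Z q ^ 2))
    (r := fun q => W q * boxOp (spaceTimeFrame u) η Z q ^ 2 / 2) hF hF₀ (by fun_prop)
    (fun q hq => by simp only [grad_zero q hq, sq_zero q hq, mul_zero, add_zero]) (by fun_prop)
    box_zero hab hM initial final interior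
  rw [integral_add ((integrable_space_slice ν hK (by fun_prop) grad_zero a).const_mul c₁)
      ((integrable_space_slice ν hK (by fun_prop) sq_zero a).const_mul c₂),
    integral_const_mul, integral_const_mul] at flux_estimate
  simp only [integral_div] at flux_estimate
  exact flux_estimate.trans_eq (by ring)

variable {n : ℕ} {x₀ : EuclideanSpace ℝ (Fin n)} {β l T R δ : ℝ} (C₀ : ℝ)
  {K : Set (EuclideanSpace ℝ (Fin n))}

theorem exists_eventually_integral_initial_le (hK : IsCompact K) (hβ : β ∈ Ioo 0 1) (hl : 0 < l)
    (hT : 0 < T) (hδ : 0 < δ) (hR₀ : 0 ≤ R) (hRT : R < β * T)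
    (hdist : ∀ x ∈ K, ‖x - x₀‖ ∈ Icc δ R)
    (hlarge : 2 * (1 + β) ^ 2 ≤ l * ((1 - β) * (4 * δ ^ 2))) :
    ∃ M > 0, ∀ᶠ s in Filter.atTop, ∀ Z : EuclideanSpace ℝ (Fin n) × ℝ → ℝ, ContDiff ℝ 2 Z →
      (∀ q ∉ Prod.fst ⁻¹' K, Z q = 0) →
        s * (∫ x, exp (2 * expWeight s l (spaceTimePsi x₀ β C₀) (x, -T)) *
            gradForm (coordFrame n) 1 Z Z (x, -T)) +
          s ^ 3 * (∫ x, exp (2 * expWeight s l (spaceTimePsi x₀ β C₀) (x, -T)) * Z (x, -T) ^ 2) ≤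
        M * ∫ t in Ioo (-T) T, ∫ x, exp (2 * expWeight s l (spaceTimePsi x₀ β C₀) (x, t)) *
          boxOp (coordFrame n) waveSignature Z (x, t) ^ 2 := by
  have hS : IsCompact (K ×ˢ Icc (-T) T) := hK.prod isCompact_Icc
  have hψ {k : WithTop ℕ∞} : ContDiff ℝ k (spaceTimePsi x₀ β C₀) := contDiff_spaceTimePsi x₀ β C₀
  have grad_psi_ge : ∀ q ∈ K ×ˢ Icc (-T) T, 4 * δ ^ 2 ≤
      gradForm (coordFrame n) 1 (spaceTimePsi x₀ β C₀) (spaceTimePsi x₀ β C₀) q := by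
    rintro q ⟨hq, -⟩
    have : δ ^ 2 ≤ ‖q.1 - x₀‖ ^ 2 := by gcongr; exact (hdist q.1 hq).1
    rw [gradForm_one_coordFrame, Pi.add_apply, Pi.mul_apply,
      spaceGradForm_spaceTimePsi_spaceTimePsi]
    linarith [mul_self_nonneg (dirDeriv (0, 1) (spaceTimePsi x₀ β C₀) q)]
  obtain ⟨C, hC, boundary⟩ := exists_eventually_exp_mul_le_time_mul_carlemanFlux_none C₀ (1 + β)
    hS hβ.1 hl hT hR₀ hRT fun q hq => (hdist q.1 hq.1).2
  refine ⟨C * T / 2, by positivity, ?_⟩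
  filter_upwards [boundary, Filter.eventually_ge_atTop 0, eventually_frameDiv_carlemanFlux_le
    (coordFrame n) waveSignature (1 + β) l hS hψ hl (sub_pos.mpr hβ.2)
    (isPseudoconvexOn_spaceTimePsi x₀ β C₀ _) (by positivity) grad_psi_ge hlarge]
    with s boundary hs interior Z hZ hZ₀
  set Φ := expWeight s l (spaceTimePsi x₀ β C₀)
  have hΦ : ContDiff ℝ 2 Φ := contDiff_expWeight s l hψ
  have hW : Continuous fun q => exp (2 * Φ q) := by
    have := hΦ.continuous
    fun_prop
  have hv : ContDiff ℝ 2 (expWeight 1 1 Φ * Z) := (contDiff_expWeight 1 1 hΦ).mul hZ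
  have boundary_Z (q) (hq) (hqT) := boundary q hq hqT Z (hZ.differentiable two_ne_zero)
  have hends {t : ℝ} (ht : |t| = T) : t ∈ Icc (-T) T := abs_le.mp ht.le
  refine weighted_energy_initial_le (M := C * T) volume hK
    (contDiff_carlemanFlux (coordFrame n) waveSignature (1 + β) s l hψ hv) (fun a _ hq =>
      carlemanFlux_eq_zero_of_notMem _ _ _ s l (hK.isClosed.preimage continuous_fst)
        (fun p hp => by simp [hZ₀ p hp]) _ a hq)
    hW hZ hZ₀ (by linarith) (by positivity) (fun x hx => ?_)
    (fun x hx => ?_) (fun x hx t ht => ?_)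
  · have ht : |(-T)| = T := by rw [abs_neg, abs_of_pos hT]
    exact (boundary_Z (x, -T) ⟨hx, hends ht⟩ ht).trans_eq (by ring)
  · have ht : |T| = T := abs_of_pos hT
    have hG := gradForm_one_self_nonneg (coordFrame n) Z (x, T)
    exact nonneg_of_mul_nonneg_right (nonneg_of_mul_nonneg_right
      (le_trans (by positivity) (boundary_Z (x, T) ⟨hx, hends ht⟩ ht)) hC) hT
  · have hdiv := interior (x, t) ⟨hx, Ioo_subset_Icc_self ht⟩ _ hv
    rwa [expWeight_neg_mul_expWeight] at hdiv

end SpaceTimeEstimate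

section WaveNotation

variable {n : ℕ} {z : EuclideanSpace ℝ (Fin n) → ℝ → ℝ}

theorem norm_gradient_sq (f : EuclideanSpace ℝ (Fin n) → ℝ) (x : EuclideanSpace ℝ (Fin n)) :
    ‖gradient f x‖ ^ 2 = ∑ i, fderiv ℝ f x (EuclideanSpace.single i 1) ^ 2 := by
  have partial_eq (i : Fin n) : gradient f x i = fderiv ℝ f x (EuclideanSpace.single i 1) := by
    rw [← InnerProductSpace.toDual_symm_apply, ← gradient, EuclideanSpace.inner_single_right]
    simp
  simp only [EuclideanSpace.norm_sq_eq, norm_eq_abs, sq_abs, partial_eq]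

theorem sq_deriv_add_norm_gradient_sq
    (hz : Differentiable ℝ fun q : EuclideanSpace ℝ (Fin n) × ℝ => z q.1 q.2)
    (x : EuclideanSpace ℝ (Fin n)) (t : ℝ) :
    deriv (z x) t ^ 2 + ‖gradient (fun y => z y t) x‖ ^ 2 =
      gradForm (coordFrame n) 1 (fun q => z q.1 q.2) (fun q => z q.1 q.2) (x, t) := by
  rw [norm_gradient_sq, (hasDerivAt_time_slice hz x t).deriv, gradForm_one_coordFrame]
  simp [spaceGradForm, ← fderiv_space_slice hz, sq]

theorem deriv_deriv_sub_lap (hz : ContDiff ℝ 2 fun q : EuclideanSpace ℝ (Fin n) × ℝ => z q.1 q.2)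
    (x : EuclideanSpace ℝ (Fin n)) (t : ℝ) :
    deriv (deriv (z x)) t - lap (fun y => z y t) x =
      boxOp (coordFrame n) waveSignature (fun q => z q.1 q.2) (x, t) := by
  have hz' := hz.differentiable two_ne_zero
  have time_deriv : deriv (z x) = fun t => dirDeriv (0, 1) (fun q => z q.1 q.2) (x, t) :=
    funext fun t => (hasDerivAt_time_slice hz' x t).deriv
  have space_deriv (u : EuclideanSpace ℝ (Fin n)) : (fun y => fderiv ℝ (fun y => z y t) y u) =
      fun y => dirDeriv (u, 0) (fun q => z q.1 q.2) (y, t) :=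
    funext fun y => fderiv_space_slice hz' y t u
  rw [time_deriv, (hasDerivAt_time_slice (differentiable_dirDeriv _ hz) x t).deriv]
  simp [lap, space_deriv, fderiv_space_slice (differentiable_dirDeriv _ hz), boxOp, coordFrame,
    spaceTimeFrame, waveSignature, sub_eq_add_neg]

theorem two_mul_mul_phi (x₀ : EuclideanSpace ℝ (Fin n)) (β C₀ l s : ℝ)
    (x : EuclideanSpace ℝ (Fin n)) (t : ℝ) :
    2 * s * phi x₀ β C₀ l x t = 2 * expWeight s l (spaceTimePsi x₀ β C₀) (x, t) :=
  mul_assoc _ _ _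

theorem setIntegral_weight_mul {X : Type*} [MeasurableSpace X] (ν : Measure X) {K Ω : Set X}
    {f : X × ℝ → ℝ} (W : X × ℝ → ℝ) (hKΩ : K ⊆ Ω) (hf : ∀ q ∉ Prod.fst ⁻¹' K, f q = 0) (t : ℝ) :
    ∫ x in Ω, W (x, t) * f (x, t) ∂ν = ∫ x, W (x, t) * f (x, t) ∂ν :=
  setIntegral_eq_integral_of_forall_compl_eq_zero fun x hx => by
    rw [hf (x, t) fun h => hx (hKΩ h), mul_zero]

variable {x₀ : EuclideanSpace ℝ (Fin n)} {β C₀ l s : ℝ} {K Ω : Set (EuclideanSpace ℝ (Fin n))}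

theorem setIntegral_phi_mul_sq (hKΩ : K ⊆ Ω) (hzK : ∀ x ∉ K, ∀ t, z x t = 0) (t : ℝ) :
    ∫ x in Ω, exp (2 * s * phi x₀ β C₀ l x t) * z x t ^ 2 =
      ∫ x, exp (2 * expWeight s l (spaceTimePsi x₀ β C₀) (x, t)) * z x t ^ 2 := by
  simp only [two_mul_mul_phi]
  exact setIntegral_weight_mul volume (f := fun q => z q.1 q.2 ^ 2)
    (fun q => exp (2 * expWeight s l (spaceTimePsi x₀ β C₀) q)) hKΩ
    (fun q hq => by simp [hzK q.1 hq]) t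

variable (hz : ContDiff ℝ 2 fun q : EuclideanSpace ℝ (Fin n) × ℝ => z q.1 q.2) (hK : IsClosed K)
  (hKΩ : K ⊆ Ω) (hzK : ∀ x ∉ K, ∀ t, z x t = 0)
include hz hK hKΩ hzK

theorem setIntegral_phi_mul_energy (t : ℝ) :
    ∫ x in Ω, exp (2 * s * phi x₀ β C₀ l x t) *
        (deriv (z x) t ^ 2 + ‖gradient (fun y => z y t) x‖ ^ 2) =
      ∫ x, exp (2 * expWeight s l (spaceTimePsi x₀ β C₀) (x, t)) *
        gradForm (coordFrame n) 1 (fun q => z q.1 q.2) (fun q => z q.1 q.2) (x, t) := by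
  simp only [two_mul_mul_phi, sq_deriv_add_norm_gradient_sq (hz.differentiable two_ne_zero)]
  exact setIntegral_weight_mul volume
    (fun q => exp (2 * expWeight s l (spaceTimePsi x₀ β C₀) q)) hKΩ
    (fun q hq => gradForm_eq_zero_of_notMem (coordFrame n) 1 (hK.preimage continuous_fst)
      (fun p hp => hzK p.1 hp p.2) _ hq) t

theorem setIntegral_phi_mul_wave_sq (t : ℝ) :
    ∫ x in Ω, exp (2 * s * phi x₀ β C₀ l x t) *
        (deriv (deriv (z x)) t - lap (fun y => z y t) x) ^ 2 =
      ∫ x, exp (2 * expWeight s l (spaceTimePsi x₀ β C₀) (x, t)) *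
        boxOp (coordFrame n) waveSignature (fun q => z q.1 q.2) (x, t) ^ 2 := by
  simp only [two_mul_mul_phi, deriv_deriv_sub_lap hz]
  refine setIntegral_weight_mul volume
    (f := fun q => boxOp (coordFrame n) waveSignature (fun q => z q.1 q.2) q ^ 2)
    (fun q => exp (2 * expWeight s l (spaceTimePsi x₀ β C₀) q)) hKΩ (fun q hq => ?_) t
  rw [boxOp_eq_zero_of_notMem (coordFrame n) waveSignature (hK.preimage continuous_fst)
    (fun p hp => hzK p.1 hp p.2) hq, zero_pow two_ne_zero]

end WaveNotation

section DistanceBounds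

variable {E : Type*} [NormedAddCommGroup E] {Ω : Set E} {x₀ x : E}

theorem norm_sub_le_sSup_of_mem_closure (hΩ : Bornology.IsBounded Ω) (hx : x ∈ closure Ω) :
    ‖x - x₀‖ ≤ sSup ((fun y => ‖y - x₀‖) '' Ω) := by
  obtain ⟨C, hC⟩ := hΩ.exists_norm_le
  have bddAbove : BddAbove ((fun y => ‖y - x₀‖) '' Ω) :=
    ⟨C + ‖x₀‖, forall_mem_image.mpr fun y hy =>
      (norm_sub_le y x₀).trans (add_le_add_left (hC y hy) _)⟩
  exact closure_minimal (fun y hy => le_csSup bddAbove (mem_image_of_mem _ hy))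
    (isClosed_le (continuous_norm.comp (continuous_sub_right x₀)) continuous_const) hx

theorem exists_pos_forall_le_norm_sub (hx₀ : x₀ ∉ closure Ω) :
    ∃ δ > 0, ∀ x ∈ closure Ω, δ ≤ ‖x - x₀‖ := by
  obtain ⟨δ, hδ, hball⟩ := Metric.isOpen_iff.mp isClosed_closure.isOpen_compl x₀ hx₀
  refine ⟨δ, hδ, fun x hx => ?_⟩
  by_contra! hlt
  exact hball (mem_ball_iff_norm.mpr hlt) hx

end DistanceBounds

theorem carleman_pointwise_at_minus_T_general {n : ℕ} {Ω : Set (EuclideanSpace ℝ (Fin n))}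
    (hΩb : Bornology.IsBounded Ω) {T : ℝ} {x₀ : EuclideanSpace ℝ (Fin n)} (hx₀ : x₀ ∉ closure Ω)
    {β : ℝ} (hβ : β ∈ Ioo (0 : ℝ) 1) (htime : sSup ((fun x => ‖x - x₀‖) '' Ω) < β * T) (C₀ : ℝ) :
    ∃ l₀ > (0 : ℝ), ∀ l ≥ l₀, ∃ s₀ > (0 : ℝ), ∃ M > (0 : ℝ), ∀ s ≥ s₀,
      ∀ z : EuclideanSpace ℝ (Fin n) → ℝ → ℝ,
        ContDiff ℝ 2 (fun q : EuclideanSpace ℝ (Fin n) × ℝ => z q.1 q.2) →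
        (∃ K : Set (EuclideanSpace ℝ (Fin n)), IsCompact K ∧ K ⊆ Ω ∧
          ∀ x ∉ K, ∀ t : ℝ, z x t = 0) →
        s * (∫ x in Ω, exp (2 * s * phi x₀ β C₀ l x (-T)) *
              ((deriv (z x) (-T)) ^ 2 + ‖gradient (fun y => z y (-T)) x‖ ^ 2))
          + s ^ 3 * (∫ x in Ω, exp (2 * s * phi x₀ β C₀ l x (-T)) * (z x (-T)) ^ 2)
        ≤ M * ∫ t in Ioo (-T) T, ∫ x in Ω, exp (2 * s * phi x₀ β C₀ l x t) *
            (deriv (deriv (z x)) t - lap (fun y => z y t) x) ^ 2 := by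
  have hR₀ : 0 ≤ sSup ((fun x => ‖x - x₀‖) '' Ω) :=
    sSup_nonneg (forall_mem_image.mpr fun x _ => norm_nonneg _)
  have hT : 0 < T := pos_of_mul_pos_right (hR₀.trans_lt htime) hβ.1.le
  obtain ⟨δ, hδ, hδΩ⟩ := exists_pos_forall_le_norm_sub hx₀
  have hβ₁ : 0 < 1 - β := sub_pos.mpr hβ.2
  have hβ₂ : 0 < 1 + β := by linarith [hβ.1]
  refine ⟨2 * (1 + β) ^ 2 / ((1 - β) * (4 * δ ^ 2)), by positivity, fun l hl => ?_⟩
  obtain ⟨M, hM, estimate⟩ := exists_eventually_integral_initial_le C₀ hΩb.isCompact_closure hβ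
    (lt_of_lt_of_le (by positivity) hl) hT hδ hR₀ htime
    (fun x hx => ⟨hδΩ x hx, norm_sub_le_sSup_of_mem_closure hΩb hx⟩)
    ((div_le_iff₀ (by positivity)).mp hl)
  obtain ⟨s₀, estimate⟩ := Filter.eventually_atTop.mp estimate
  refine ⟨max s₀ 1, by positivity, M, hM, fun s hs z hz ⟨K, hK, hKΩ, hzK⟩ => ?_⟩
  rw [setIntegral_phi_mul_energy hz hK.isClosed hKΩ hzK, setIntegral_phi_mul_sq hKΩ hzK]
  simp only [setIntegral_phi_mul_wave_sq hz hK.isClosed hKΩ hzK]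
  exact estimate s ((le_max_left _ _).trans hs) _ hz fun q hq =>
    hzK q.1 (fun h => hq (subset_closure (hKΩ h))) q.2

/-- **Carleman estimate with pointwise terms at time `-T` (Corollary 2.8)** specialized to
functions supported, in the space variable, in a compact subset of `Ω`:
`s∫_Ω e^{2sφ(-T)}(|∂ₜz(-T)|² + |∇z(-T)|²) + s³∫_Ω e^{2sφ(-T)}|z(-T)|²
  ≤ M∫∫ e^{2sφ}|∂ₜ²z - Δz|²`. -/
theorem carleman_pointwise_at_minus_T
    (n : ℕ) (hn : 1 ≤ n)
    (Ω : Set (EuclideanSpace ℝ (Fin n))) (hΩo : IsOpen Ω) (hΩb : Bornology.IsBounded Ω)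
    (T : ℝ) (hT : 0 < T)
    (x₀ : EuclideanSpace ℝ (Fin n)) (hx₀ : x₀ ∉ closure Ω)
    (β : ℝ) (hβ : β ∈ Set.Ioo (0:ℝ) 1)
    (htime : sSup ((fun x => ‖x - x₀‖) '' Ω) < β * T)
    (C₀ : ℝ) (hC₀ : 0 < C₀)
    (hψ : ∀ x ∈ Ω, ∀ t ∈ Set.Ioo (-T) T, 1 ≤ psi x₀ β C₀ x t) :
    ∃ l > (0:ℝ), ∃ s₀ > (0:ℝ), ∃ M > (0:ℝ), ∀ s ≥ s₀,
      ∀ z : EuclideanSpace ℝ (Fin n) → ℝ → ℝ,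
        ContDiff ℝ (⊤ : ℕ∞) (fun q : EuclideanSpace ℝ (Fin n) × ℝ => z q.1 q.2) →
        (∃ K : Set (EuclideanSpace ℝ (Fin n)), IsCompact K ∧ K ⊆ Ω ∧
          ∀ x ∉ K, ∀ t : ℝ, z x t = 0) →
        s * (∫ x in Ω, Real.exp (2 * s * phi x₀ β C₀ l x (-T)) *
              ((deriv (z x) (-T)) ^ 2 + ‖gradient (fun y => z y (-T)) x‖ ^ 2))
          + s ^ 3 * (∫ x in Ω, Real.exp (2 * s * phi x₀ β C₀ l x (-T)) * (z x (-T)) ^ 2)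
        ≤ M * ∫ t in Set.Ioo (-T) T, ∫ x in Ω, Real.exp (2 * s * phi x₀ β C₀ l x t) *
            (deriv (deriv (z x)) t - lap (fun y => z y t) x) ^ 2 := by
  obtain ⟨l, hl, estimate⟩ := carleman_pointwise_at_minus_T_general hΩb hx₀ hβ htime C₀
  obtain ⟨s₀, hs₀, M, hM, estimate⟩ := estimate l le_rfl
  exact ⟨l, hl, s₀, hs₀, M, hM, fun s hs z hz => estimate s hs z (contDiff_infty.mp hz 2)⟩
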